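/- arXiv:1006.2849 — 5 statements merged into one kernel-verified Lean document; each statement's English description precedes it below -/
import Mathlib

section
/- For every p ∈ (0,1) and every φ ∈ (0,π), (1/π)·∫₀^π ln(p⁴ cos²θ + (sin θ + (1 − p²) cot φ · cos θ)²) dθ = ln(p² + (1 − p²)²/(4 sin²φ)). -/
open MeasureTheory Real

/-!
The integrand is `log |w θ|²` with `w θ = sin θ + α cos θ` and `α = (1 - p²) cot φ + i p²`.
By Euler's formulas `2 e^{iθ} w θ = (α - i) e^{2iθ} + (α + i)`, so with `z = e^{2iθ}` and
`a = -(α + i) / (α - i)` one has `|w θ| = |α - i| / 2 * |z - a|`. As `Im α > 0`, the point `a`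
lies outside the closed unit disc, where the mean of `log |z - a|` over the unit circle is `log |a|`
(`circleAverage_log_norm_sub_const₂`). The mean of the integrand is therefore `log (|α + i|² / 4)`,
and `|α + i|² = (1 - p²)² cot² φ + (1 + p²)²` gives the stated closed form.
-/

/-- The pointwise factorisation of `|sin θ + (b + i q) cos θ|²` through `z = e^{2iθ}`. -/
lemma normSq_factor (b q θ : ℝ) (hβ : (⟨b, q - 1⟩ : ℂ) ≠ 0) :
    q ^ 2 * Real.cos θ ^ 2 + (Real.sin θ + b * Real.cos θ) ^ 2
      = (‖(⟨b, q - 1⟩ : ℂ)‖ / 2 *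
          ‖circleMap 0 1 (2 * θ) - (-(⟨b, q + 1⟩ : ℂ) / ⟨b, q - 1⟩)‖) ^ 2 := by
  have h1 : ‖(⟨b, q - 1⟩ : ℂ)‖ / 2 *
      ‖circleMap 0 1 (2 * θ) - (-(⟨b, q + 1⟩ : ℂ) / ⟨b, q - 1⟩)‖
      = ‖(⟨b, q - 1⟩ : ℂ) * circleMap 0 1 (2 * θ) + ⟨b, q + 1⟩‖ / 2 := by
    rw [div_mul_eq_mul_div, ← norm_mul]
    congr 2
    field_simp
    ring
  have hz : circleMap 0 1 (2 * θ) = ⟨Real.cos (2 * θ), Real.sin (2 * θ)⟩ := by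
    apply Complex.ext <;>
      simp [circleMap, Complex.exp_re, Complex.exp_im]
  rw [h1, hz, div_pow, ← Complex.normSq_eq_norm_sq, Complex.normSq_apply]
  simp only [Complex.add_re, Complex.add_im, Complex.mul_re, Complex.mul_im]
  rw [Real.cos_two_mul, Real.sin_two_mul]
  have hs : Real.sin θ ^ 2 = 1 - Real.cos θ ^ 2 := Real.sin_sq θ
  linear_combination (1 - Real.cos θ ^ 2 * (b ^ 2 + (q - 1) ^ 2)) * hs

/-- The mean of `log |sin θ + (b + i q) cos θ|²` over a half period. -/
lemma mean_log (b q : ℝ) (hq0 : 0 < q) (hq1 : q < 1) :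
    (1 / π) * ∫ θ in (0 : ℝ)..π,
        Real.log (q ^ 2 * Real.cos θ ^ 2 + (Real.sin θ + b * Real.cos θ) ^ 2)
      = Real.log ((b ^ 2 + (q + 1) ^ 2) / 4) := by
  have hβ : (⟨b, q - 1⟩ : ℂ) ≠ 0 := fun h => by
    have := congrArg Complex.im h
    simp at this
    linarith
  have hβn : 0 < ‖(⟨b, q - 1⟩ : ℂ)‖ := norm_pos_iff.2 hβ
  have hsq (y : ℝ) : ‖(⟨b, y⟩ : ℂ)‖ ^ 2 = b ^ 2 + y ^ 2 := by
    rw [← Complex.normSq_eq_norm_sq, Complex.normSq_mk]; ring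
  set a : ℂ := -(⟨b, q + 1⟩ : ℂ) / ⟨b, q - 1⟩ with ha
  have han : ‖a‖ = ‖(⟨b, q + 1⟩ : ℂ)‖ / ‖(⟨b, q - 1⟩ : ℂ)‖ := by
    rw [ha, norm_div, norm_neg]
  have ha1 : 1 < ‖a‖ := by
    rw [han, one_lt_div hβn]
    apply lt_of_pow_lt_pow_left₀ 2 (norm_nonneg _)
    rw [hsq, hsq]
    nlinarith
  have hne (x : ℝ) : ‖circleMap 0 1 x - a‖ ≠ 0 := by
    rw [norm_ne_zero_iff, sub_ne_zero]
    rintro h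
    rw [← h] at ha1
    simp at ha1
  have hcont : Continuous fun θ : ℝ => Real.log ‖circleMap 0 1 (2 * θ) - a‖ := by
    refine Continuous.log ?_ fun θ => hne _
    exact (((continuous_circleMap 0 1).comp (continuous_const.mul continuous_id)).sub
      continuous_const).norm
  have hpt (θ : ℝ) : Real.log (q ^ 2 * Real.cos θ ^ 2 + (Real.sin θ + b * Real.cos θ) ^ 2)
      = 2 * Real.log (‖(⟨b, q - 1⟩ : ℂ)‖ / 2) + 2 * Real.log ‖circleMap 0 1 (2 * θ) - a‖ := by
    rw [normSq_factor b q θ hβ, Real.log_pow, Real.log_mul (by positivity) (hne _)]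
    push_cast
    ring
  have havg := circleAverage_log_norm_sub_const₂ ha1
  rw [circleAverage_def, smul_eq_mul] at havg
  have hint : ∫ θ in (0 : ℝ)..π, Real.log ‖circleMap 0 1 (2 * θ) - a‖ = π * Real.log ‖a‖ := by
    rw [intervalIntegral.integral_comp_mul_left
      (fun x => Real.log ‖circleMap 0 1 x - a‖) two_ne_zero, ← havg, mul_zero, smul_eq_mul]
    field_simp
  simp_rw [hpt]
  rw [intervalIntegral.integral_add (by simp) ((hcont.const_mul 2).intervalIntegrable _ _),
    intervalIntegral.integral_const, intervalIntegral.integral_const_mul, hint, smul_eq_mul]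
  have hfin : (b ^ 2 + (q + 1) ^ 2) / 4 = (‖(⟨b, q - 1⟩ : ℂ)‖ / 2 * ‖a‖) ^ 2 := by
    rw [← hsq, han]
    field_simp
    ring
  rw [hfin, Real.log_pow, Real.log_mul (by positivity) (by positivity)]
  push_cast
  field_simp
  ring

/-- For every `p ∈ (0,1)` and `φ ∈ (0,π)`,
`(1/π) ∫₀^π ln(p⁴ cos²θ + (sin θ + (1-p²) cot φ cos θ)²) dθ = ln(p² + (1-p²)²/(4 sin²φ))`. -/
theorem statement5 (p φ : ℝ) (hp : p ∈ Set.Ioo (0 : ℝ) 1) (hφ : φ ∈ Set.Ioo 0 π) :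
    (1 / π) * ∫ θ in (0 : ℝ)..π,
        Real.log (p ^ 4 * Real.cos θ ^ 2 +
          (Real.sin θ + (1 - p ^ 2) * (Real.cos φ / Real.sin φ) * Real.cos θ) ^ 2)
      = Real.log (p ^ 2 + (1 - p ^ 2) ^ 2 / (4 * Real.sin φ ^ 2)) := by
  have hs : Real.sin φ ≠ 0 := (Real.sin_pos_of_mem_Ioo hφ).ne'
  have h := mean_log ((1 - p ^ 2) * (Real.cos φ / Real.sin φ)) (p ^ 2) (pow_pos hp.1 2)
    (by nlinarith [hp.1, hp.2])
  rw [show (p ^ 2) ^ 2 = p ^ 4 by ring] at h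
  rw [h]
  congr 1
  field_simp
  rw [Real.cos_sq']
  ring
end

section
/- Let p ∈ (0,1), φ ∈ (0,π), λ = 2 cos φ, and let T₀ = [[λ, −1], [1, 0]], T₊ = [[λ, −p], [1, 0]], T₋ = [[λ/p, −1/p], [1, 0]]. Then for every integer m ≥ 0, the operator norm satisfies ‖T₋ · T₊ · T₀^m‖ ≤ ((1 + |cos φ|)/(1 − |cos φ|)) · (1 + (1 + λ²)/p²). -/
/-!
The free transfer matrix `T₀` preserves the quadratic form `Q(x, y) = x² - lam x y + y²`
(it is conjugate to a rotation, and `Q` is the pullback of the Euclidean form). For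
`lam = 2c` with `|c| < 1` one has `(1 - |c|)(x² + y²) ≤ Q(x, y) ≤ (1 + |c|)(x² + y²)`, hence
`‖T₀^m v‖² ≤ K ‖v‖²` with `K = (1 + |c|)/(1 - |c|) ≥ 1`. The squared Frobenius norm of `T₋ T₊`
is `(lam² - 1)²/p² + 2 lam² + p²`, which is at most `B²` for `B = 1 + (1 + lam²)/p²`. Therefore
`‖T₋ T₊ T₀^m v‖² ≤ B² K ‖v‖² ≤ (K B)² ‖v‖²`.
-/

open Real

/-- The operator (spectral) norm of a 2×2 real matrix, i.e. its norm as a continuous linear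
endomorphism of Euclidean space. -/
noncomputable def opNorm (M : Matrix (Fin 2) (Fin 2) ℝ) : ℝ :=
  ‖Matrix.toEuclideanCLM (𝕜 := ℝ) (n := Fin 2) M‖

theorem opNorm_le_of_sq (M : Matrix (Fin 2) (Fin 2) ℝ) (C : ℝ) (hC : 0 ≤ C)
    (h : ∀ v : Fin 2 → ℝ,
      (M.mulVec v 0) ^ 2 + (M.mulVec v 1) ^ 2 ≤ C ^ 2 * (v 0 ^ 2 + v 1 ^ 2)) :
    opNorm M ≤ C := by
  refine ContinuousLinearMap.opNorm_le_bound _ hC fun v => ?_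
  refine le_of_sq_le_sq ?_ (by positivity)
  rw [mul_pow, EuclideanSpace.real_norm_sq_eq, EuclideanSpace.real_norm_sq_eq,
    Fin.sum_univ_two, Fin.sum_univ_two]
  exact h v.ofLp

/-- The form `x² - lam x y + y²` is invariant under the powers of the free transfer matrix. -/
theorem form_pow_mulVec (lam : ℝ) (m : ℕ) (v w : Fin 2 → ℝ)
    (hw : w = ((!![lam, -1; 1, 0] : Matrix (Fin 2) (Fin 2) ℝ) ^ m).mulVec v) :
    w 0 ^ 2 - lam * w 0 * w 1 + w 1 ^ 2 = v 0 ^ 2 - lam * v 0 * v 1 + v 1 ^ 2 := by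
  induction m generalizing w with
  | zero => simp [hw]
  | succ k ih =>
    rw [pow_succ', ← Matrix.mulVec_mulVec] at hw
    rw [← ih _ rfl, hw]
    simp only [Matrix.mulVec, dotProduct, Fin.sum_univ_two, Matrix.of_apply, Matrix.cons_val_zero,
      Matrix.cons_val_one]
    ring

/-- The form `x² - 2c x y + y²` is comparable to the Euclidean one, with constants `1 ± |c|`. -/
theorem form_bounds (c x y : ℝ) :
    (1 - |c|) * (x ^ 2 + y ^ 2) ≤ x ^ 2 - 2 * c * x * y + y ^ 2 ∧
      x ^ 2 - 2 * c * x * y + y ^ 2 ≤ (1 + |c|) * (x ^ 2 + y ^ 2) := by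
  rcases abs_cases c with ⟨h, h0⟩ | ⟨h, h0⟩ <;> rw [h] <;> constructor <;>
    nlinarith [mul_nonneg (abs_nonneg c) (sq_nonneg (x - y)),
      mul_nonneg (abs_nonneg c) (sq_nonneg (x + y))]

/-- The Frobenius norm of `T₋ T₊` is at most `1 + (1 + lam²)/p²`. -/
theorem frobenius_bound (p lam : ℝ) (hp0 : 0 < p) (hp1 : p < 1) :
    ((lam ^ 2 - 1) / p) ^ 2 + 2 * lam ^ 2 + p ^ 2 ≤ (1 + (1 + lam ^ 2) / p ^ 2) ^ 2 := by
  -- With `q = 1/p² ≥ 1`, each of the three terms is dominated by one in the expanded square.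
  obtain ⟨q, hq⟩ : ∃ q, q = 1 / p ^ 2 := ⟨_, rfl⟩
  have hq1 : 1 ≤ q := by
    rw [hq, le_div_iff₀ (by positivity)]
    nlinarith
  have e1 : ((lam ^ 2 - 1) / p) ^ 2 = (lam ^ 2 - 1) ^ 2 * q := by
    rw [hq, div_pow]; ring
  have e2 : (1 + lam ^ 2) / p ^ 2 = (1 + lam ^ 2) * q := by
    rw [hq]; ring
  rw [e1, e2]
  have hp2 : p ^ 2 ≤ 1 := by nlinarith
  have h1 : (lam ^ 2 - 1) ^ 2 * q ≤ (1 + lam ^ 2) ^ 2 * q ^ 2 := by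
    apply mul_le_mul <;> nlinarith [sq_nonneg lam, sq_nonneg (1 + lam ^ 2)]
  have h2 : lam ^ 2 ≤ lam ^ 2 * q := le_mul_of_one_le_right (sq_nonneg _) hq1
  nlinarith

/-- For `p ∈ (0,1)`, `φ ∈ (0,π)`, `λ = 2 cos φ` and the one-step transfer matrices
`T₀ = [[λ, -1], [1, 0]]`, `T₊ = [[λ, -p], [1, 0]]`, `T₋ = [[λ/p, -1/p], [1, 0]]`, one has
`‖T₋ T₊ T₀^m‖ ≤ ((1 + |cos φ|)/(1 - |cos φ|)) (1 + (1 + λ²)/p²)` for every `m ≥ 0`. -/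
theorem statement9 (p φ : ℝ) (hp : p ∈ Set.Ioo (0 : ℝ) 1) (hφ : φ ∈ Set.Ioo 0 π)
    (lam : ℝ) (hlam : lam = 2 * Real.cos φ) (m : ℕ) :
    opNorm ((!![lam / p, -1 / p; 1, 0] : Matrix (Fin 2) (Fin 2) ℝ) *
        (!![lam, -p; 1, 0] : Matrix (Fin 2) (Fin 2) ℝ) *
        (!![lam, -1; 1, 0] : Matrix (Fin 2) (Fin 2) ℝ) ^ m)
      ≤ ((1 + |Real.cos φ|) / (1 - |Real.cos φ|)) * (1 + (1 + lam ^ 2) / p ^ 2) := by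
  obtain ⟨hp0, hp1⟩ := hp
  have hc : |cos φ| < 1 := by
    have hs := sin_pos_of_pos_of_lt_pi hφ.1 hφ.2
    rw [← sq_lt_one_iff_abs_lt_one]
    nlinarith [sin_sq_add_cos_sq φ]
  have hd : 0 < 1 - |cos φ| := by linarith
  have hK : 1 ≤ (1 + |cos φ|) / (1 - |cos φ|) := by
    rw [le_div_iff₀ hd]
    linarith [abs_nonneg (cos φ)]
  refine opNorm_le_of_sq _ _ (by positivity) fun v => ?_
  rw [← Matrix.mulVec_mulVec]
  obtain ⟨w, hw⟩ : ∃ w, w = ((!![lam, -1; 1, 0] : Matrix (Fin 2) (Fin 2) ℝ) ^ m).mulVec v :=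
    ⟨_, rfl⟩
  rw [← hw]
  have hwv : w 0 ^ 2 + w 1 ^ 2
      ≤ (1 + |cos φ|) / (1 - |cos φ|) * (v 0 ^ 2 + v 1 ^ 2) := by
    have hQ := form_pow_mulVec lam m v w hw
    rw [hlam] at hQ
    rw [div_mul_eq_mul_div, le_div_iff₀ hd]
    linarith [(form_bounds (cos φ) (w 0) (w 1)).1, (form_bounds (cos φ) (v 0) (v 1)).2]
  have hF := frobenius_bound p lam hp0 hp1
  generalize (1 + |cos φ|) / (1 - |cos φ|) = K at *
  generalize 1 + (1 + lam ^ 2) / p ^ 2 = B at *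
  have e0 : ((!![lam / p, -1 / p; 1, 0] : Matrix (Fin 2) (Fin 2) ℝ) *
      !![lam, -p; 1, 0]).mulVec w 0 = (lam ^ 2 - 1) / p * w 0 - lam * w 1 := by
    simp [Matrix.mulVec, dotProduct, Fin.sum_univ_two, Matrix.mul_apply]
    field_simp
    ring
  have e1 : ((!![lam / p, -1 / p; 1, 0] : Matrix (Fin 2) (Fin 2) ℝ) *
      !![lam, -p; 1, 0]).mulVec w 1 = lam * w 0 - p * w 1 := by
    simp [Matrix.mulVec, dotProduct, Fin.sum_univ_two, Matrix.mul_apply]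
    ring
  rw [e0, e1]
  generalize (lam ^ 2 - 1) / p = a at *
  calc (a * w 0 - lam * w 1) ^ 2 + (lam * w 0 - p * w 1) ^ 2
      -- Cauchy–Schwarz in each row
      ≤ (a ^ 2 + 2 * lam ^ 2 + p ^ 2) * (w 0 ^ 2 + w 1 ^ 2) := by
        nlinarith [sq_nonneg (a * w 1 + lam * w 0), sq_nonneg (lam * w 1 + p * w 0)]
    _ ≤ B ^ 2 * (K * (v 0 ^ 2 + v 1 ^ 2)) := by gcongr
    _ ≤ B ^ 2 * (K ^ 2 * (v 0 ^ 2 + v 1 ^ 2)) := by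
        gcongr
        nlinarith
    _ = (K * B) ^ 2 * (v 0 ^ 2 + v 1 ^ 2) := by ring
end

section
/- Let (A_n)_{n≥1} be 2×2 real matrices of determinant 1 with ‖A_n‖ ≤ B for all n, set T_n = A_n · A_{n−1} ··· A_1 and t_n = ‖T_n‖, and assume Σ_{n≥1} ‖A_{n+1}‖²/t_n² < ∞. Then Σ_{n≥1} t_n^{−2} < ∞ and there exists φ* ∈ [0, π) such that, with v_{φ*} = (cos φ*, sin φ*) and v_{φ*}^⊥ = (−sin φ*, cos φ*): (i) for every n, ‖T_n v_{φ*}‖² ≤ (π²/4)·B⁴·t_n²·(Σ_{m=n}^{∞} t_m^{−2})² + t_n^{−2}; and (ii) lim_{n→∞} ‖T_n v_{φ*}‖/‖T_n v_{φ*}^⊥‖ = 0. -/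
/-!
A matrix `M` of determinant one has an orthonormal frame `e`, `e^⊥` in which
`‖M v‖² = ‖M‖² ⟨e^⊥, v⟩² + ‖M‖⁻² ⟨e, v⟩²` (`exists_contracted`), so `e` is its most contracted
direction. Let `e_n` be the contracted direction of `T_n`. Since
`‖T_{n+1} e_n‖ ≤ ‖A_{n+1}‖ / t_n` and `t_n ≤ ‖A_{n+1}‖ t_{n+1}`, the sine of the angle between
`e_n` and `e_{n+1}` is at most `‖A_{n+1}‖² / t_n²` (`sin_sq_le`).

Working with unit vectors instead of angles, choose the signs so that consecutive `e_n` have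
nonnegative inner product. Then `|e_n - e_{n+1}| ≤ √2 B² / t_n²`, the sequence is Cauchy, and its
limit `u` satisfies `|u - e_n| ≤ √2 B² ∑_{m ≥ n} t_m⁻²`. The frame formula turns this into the
bound on `‖T_n u‖²`, with the constant `2 ≤ π² / 4`. Divided by `t_n²`, that bound tends to zero;
since `‖T_n u‖² + ‖T_n u^⊥‖² = t_n² + t_n⁻²`, the trace of `T_nᵀ T_n`, the ratio
`‖T_n u‖ / ‖T_n u^⊥‖` tends to zero as well.

Unit vectors of the plane are encoded as complex numbers.
-/

open Real Filter

/-- The Euclidean norm of a vector in ℝ². -/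
noncomputable def vnorm (v : Fin 2 → ℝ) : ℝ :=
  Real.sqrt (v 0 ^ 2 + v 1 ^ 2)

/-- The ordered product `T_n = A_n ⋯ A_1` (with `T_0 = 1`). -/
noncomputable def prodMat (A : ℕ → Matrix (Fin 2) (Fin 2) ℝ) : ℕ → Matrix (Fin 2) (Fin 2) ℝ
  | 0 => 1
  | (n + 1) => A (n + 1) * prodMat A n

/-! ### Norms and contracted directions -/

lemma vnorm_sq (v : Fin 2 → ℝ) : vnorm v ^ 2 = v 0 ^ 2 + v 1 ^ 2 :=
  Real.sq_sqrt (by positivity)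

lemma norm_toLp (v : Fin 2 → ℝ) : ‖(WithLp.toLp 2 v : EuclideanSpace ℝ (Fin 2))‖ = vnorm v := by
  simp [EuclideanSpace.norm_eq, vnorm, Fin.sum_univ_two]

lemma vnorm_mulVec_le (M : Matrix (Fin 2) (Fin 2) ℝ) (v : Fin 2 → ℝ) :
    vnorm (M.mulVec v) ≤ opNorm M * vnorm v := by
  have h := (Matrix.toEuclideanCLM (𝕜 := ℝ) (n := Fin 2) M).le_opNorm (WithLp.toLp 2 v)
  rw [Matrix.toEuclideanCLM_toLp, norm_toLp, norm_toLp] at h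
  exact h

lemma opNorm_le (M : Matrix (Fin 2) (Fin 2) ℝ) (C : ℝ) (hC : 0 ≤ C)
    (h : ∀ v, vnorm (M.mulVec v) ≤ C * vnorm v) : opNorm M ≤ C := by
  refine ContinuousLinearMap.opNorm_le_bound _ hC fun x => ?_
  have hx : x = WithLp.toLp 2 x.ofLp := rfl
  rw [hx, Matrix.toEuclideanCLM_toLp, norm_toLp, norm_toLp]
  exact h _

lemma opNorm_nonneg (M : Matrix (Fin 2) (Fin 2) ℝ) : 0 ≤ opNorm M := norm_nonneg _

/-- Singular value decomposition of a matrix of determinant one: the unit vector `(e.re, e.im)`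
is its most contracted direction. -/
lemma exists_contracted (M : Matrix (Fin 2) (Fin 2) ℝ) (hM : M.det = 1) :
    1 ≤ opNorm M ^ 2 ∧ ∃ e : ℂ, e.re ^ 2 + e.im ^ 2 = 1 ∧ ∀ x y : ℝ,
      vnorm (M.mulVec ![x, y]) ^ 2 = opNorm M ^ 2 * (e.re * y - e.im * x) ^ 2 +
        (opNorm M ^ 2)⁻¹ * (e.re * x + e.im * y) ^ 2 := by
  obtain ⟨a, ha⟩ : ∃ a, a = M 0 0 := ⟨_, rfl⟩
  obtain ⟨b, hb⟩ : ∃ a, a = M 0 1 := ⟨_, rfl⟩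
  obtain ⟨c, hc⟩ : ∃ a, a = M 1 0 := ⟨_, rfl⟩
  obtain ⟨d, hd⟩ : ∃ a, a = M 1 1 := ⟨_, rfl⟩
  rw [Matrix.det_fin_two, ← ha, ← hb, ← hc, ← hd] at hM
  have hN : ∀ x y : ℝ, vnorm (M.mulVec ![x, y]) ^ 2 =
      (a * x + b * y) ^ 2 + (c * x + d * y) ^ 2 := by
    intro x y
    rw [vnorm_sq]
    simp [Matrix.mulVec, dotProduct, Fin.sum_univ_two, ha, hb, hc, hd]
  -- `MᵀM` has trace `S`; its traceless part is a reflection, encoded by `z` and scaled by `R / 2`.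
  obtain ⟨S, hS⟩ : ∃ S, S = a ^ 2 + b ^ 2 + c ^ 2 + d ^ 2 := ⟨_, rfl⟩
  obtain ⟨z, hz⟩ : ∃ z : ℂ, z = ⟨a ^ 2 + c ^ 2 - b ^ 2 - d ^ 2, 2 * (a * b + c * d)⟩ := ⟨_, rfl⟩
  obtain ⟨R, hR⟩ : ∃ R, R = ‖z‖ := ⟨_, rfl⟩
  obtain ⟨t, ht⟩ : ∃ t, t = z.arg / 2 := ⟨_, rfl⟩
  have hR0 : 0 ≤ R := hR ▸ norm_nonneg z
  have h1 : R * (2 * cos t ^ 2 - 1) = a ^ 2 + c ^ 2 - b ^ 2 - d ^ 2 := by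
    rw [← Real.cos_two_mul, ht, mul_div_cancel₀ _ two_ne_zero, hR, Complex.norm_mul_cos_arg, hz]
  have h2 : R * (2 * sin t * cos t) = 2 * (a * b + c * d) := by
    rw [← Real.sin_two_mul, ht, mul_div_cancel₀ _ two_ne_zero, hR, Complex.norm_mul_sin_arg, hz]
  have hcs : sin t ^ 2 + cos t ^ 2 = 1 := Real.sin_sq_add_cos_sq t
  have hR2 : R ^ 2 = S ^ 2 - 4 := by
    have : R ^ 2 = (R * (2 * cos t ^ 2 - 1)) ^ 2 + (R * (2 * sin t * cos t)) ^ 2 := by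
      linear_combination (-4 * R ^ 2 * cos t ^ 2) * hcs
    rw [this, h1, h2, hS]
    linear_combination (4 * (a * d - b * c) + 4) * -hM
  have hS0 : 0 ≤ S := hS ▸ by positivity
  have hS2 : 2 ≤ S := by nlinarith
  obtain ⟨l, hl⟩ : ∃ l, l = (S + R) / 2 := ⟨_, rfl⟩
  have hlm : l * ((S - R) / 2) = 1 := by rw [hl]; linear_combination -hR2 / 4
  have hl1 : 1 ≤ l := by linarith
  have hli : l⁻¹ = (S - R) / 2 := inv_eq_of_mul_eq_one_right hlm
  have hQ : ∀ x y : ℝ, vnorm (M.mulVec ![x, y]) ^ 2 =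
      l * (cos t * x + sin t * y) ^ 2 + l⁻¹ * (cos t * y - sin t * x) ^ 2 := by
    intro x y
    rw [hN, hli, hl]
    have e1 : (a * x + b * y) ^ 2 + (c * x + d * y) ^ 2 = S / 2 * (x ^ 2 + y ^ 2) +
        (R * (2 * cos t ^ 2 - 1)) / 2 * (x ^ 2 - y ^ 2) + R * (2 * sin t * cos t) * x * y := by
      rw [h1, h2, hS]; ring
    rw [e1]
    linear_combination (-(S / 2) * (x ^ 2 + y ^ 2) + R / 2 * (x ^ 2 - y ^ 2)) * hcs
  have hop : opNorm M ^ 2 = l := by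
    apply le_antisymm
    · have : opNorm M ≤ √l := by
        refine opNorm_le M _ (Real.sqrt_nonneg _) fun v => ?_
        suffices hsq : vnorm (M.mulVec v) ^ 2 ≤ (√l * vnorm v) ^ 2 from
          (abs_le_of_sq_le_sq' hsq (mul_nonneg (Real.sqrt_nonneg _) (Real.sqrt_nonneg _))).2
        have hv : v = ![v 0, v 1] := by ext i; fin_cases i <;> rfl
        have hQv := hQ (v 0) (v 1)
        rw [← hv] at hQv
        rw [mul_pow, Real.sq_sqrt (by linarith), vnorm_sq v, hQv]
        have : l⁻¹ ≤ l := (inv_le_one_of_one_le₀ hl1).trans hl1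
        have e : v 0 ^ 2 + v 1 ^ 2 = (cos t * v 0 + sin t * v 1) ^ 2 +
            (cos t * v 1 - sin t * v 0) ^ 2 := by
          linear_combination -(v 0 ^ 2 + v 1 ^ 2) * hcs
        rw [e, mul_add]
        gcongr
      calc opNorm M ^ 2 ≤ √l ^ 2 := by gcongr; exact opNorm_nonneg M
        _ = l := Real.sq_sqrt (by linarith)
    · have h := vnorm_mulVec_le M ![cos t, sin t]
      have hv : vnorm ![cos t, sin t] = 1 := by simp [vnorm]
      rw [hv, mul_one] at h
      have h' : vnorm (M.mulVec ![cos t, sin t]) ^ 2 ≤ opNorm M ^ 2 := by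
        gcongr; exact Real.sqrt_nonneg _
      rw [hQ] at h'
      have e : cos t * cos t + sin t * sin t = 1 := by linarith
      rw [e] at h'
      nlinarith
  refine ⟨hop ▸ hl1, ⟨-sin t, cos t⟩, ?_, fun x y => ?_⟩
  · simp
  · rw [hQ, hop]; ring

/-! ### Rotation of the contracted direction -/

lemma prodMat_det (A : ℕ → Matrix (Fin 2) (Fin 2) ℝ)
    (hdet : ∀ n : ℕ, 1 ≤ n → (A n).det = 1) (n : ℕ) : (prodMat A n).det = 1 := by
  induction n with
  | zero => simp [prodMat]
  | succ k ih => rw [prodMat, Matrix.det_mul, hdet _ (by omega), ih, one_mul]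

/-- If `e` and `f` are the contracted directions of `T` and `A T`, the sine of the angle between
them is at most `‖A‖² / ‖T‖²`. -/
lemma sin_sq_le (A T : Matrix (Fin 2) (Fin 2) ℝ) (hA : A.det = 1)
    (hT1 : 1 ≤ opNorm T ^ 2) (hAT1 : 1 ≤ opNorm (A * T) ^ 2)
    (e f : ℂ) (he : e.re ^ 2 + e.im ^ 2 = 1) (hf : f.re ^ 2 + f.im ^ 2 = 1)
    (hTe : ∀ x y : ℝ,
      vnorm (T.mulVec ![x, y]) ^ 2 = opNorm T ^ 2 * (e.re * y - e.im * x) ^ 2 +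
        (opNorm T ^ 2)⁻¹ * (e.re * x + e.im * y) ^ 2)
    (hATf : ∀ x y : ℝ,
      vnorm ((A * T).mulVec ![x, y]) ^ 2 = opNorm (A * T) ^ 2 * (f.re * y - f.im * x) ^ 2 +
        (opNorm (A * T) ^ 2)⁻¹ * (f.re * x + f.im * y) ^ 2) :
    (f.re * e.im - f.im * e.re) ^ 2 ≤ (opNorm A ^ 2 * (opNorm T ^ 2)⁻¹) ^ 2 := by
  obtain ⟨hA1, g, hg, hAg⟩ := exists_contracted A hA
  have up : ∀ w, vnorm (A.mulVec w) ^ 2 ≤ opNorm A ^ 2 * vnorm w ^ 2 := fun w => by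
    rw [← mul_pow]
    exact pow_le_pow_left₀ (Real.sqrt_nonneg _) (vnorm_mulVec_le A w) 2
  have low : ∀ w, vnorm w ^ 2 ≤ opNorm A ^ 2 * vnorm (A.mulVec w) ^ 2 := fun w => by
    have hw : w = ![w 0, w 1] := by ext i; fin_cases i <;> rfl
    have h := hAg (w 0) (w 1)
    rw [← hw] at h
    rw [h, vnorm_sq, mul_add, ← mul_assoc, ← mul_assoc, mul_inv_cancel₀ (by positivity), one_mul]
    have e1 : w 0 ^ 2 + w 1 ^ 2 = (g.re * w 1 - g.im * w 0) ^ 2 +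
        (g.re * w 0 + g.im * w 1) ^ 2 := by
      linear_combination -(w 0 ^ 2 + w 1 ^ 2) * hg
    rw [e1]
    have : 1 ≤ opNorm A ^ 2 * opNorm A ^ 2 := by nlinarith
    nlinarith [sq_nonneg (g.re * w 1 - g.im * w 0)]
  generalize opNorm A ^ 2 = α at *
  generalize opNorm T ^ 2 = τ at *
  generalize opNorm (A * T) ^ 2 = σ at *
  have hσi : σ⁻¹ ≤ σ := (inv_le_one_of_one_le₀ hAT1).trans hAT1
  have hσ0 : 0 < σ⁻¹ := by positivity
  have hτ0 : 0 < τ⁻¹ := by positivity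
  have h1 : σ * (f.re * e.im - f.im * e.re) ^ 2 ≤ α * τ⁻¹ := by
    have h := up (T.mulVec ![e.re, e.im])
    rw [Matrix.mulVec_mulVec, hATf, hTe] at h
    have e1 : e.re * e.im - e.im * e.re = 0 := by ring
    have e2 : e.re * e.re + e.im * e.im = 1 := by linarith
    rw [e1, e2] at h
    nlinarith [mul_nonneg hσ0.le (sq_nonneg (f.re * e.re + f.im * e.im))]
  -- Testing on the most expanded direction of `T` gives `‖T‖ ≤ ‖A‖ ‖A T‖`.
  have h2 : τ ≤ α * σ := by
    have h := low (T.mulVec ![-e.im, e.re])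
    rw [Matrix.mulVec_mulVec, hATf, hTe] at h
    have e1 : e.re * e.re - e.im * -e.im = 1 := by linarith
    have e2 : e.re * -e.im + e.im * e.re = 0 := by ring
    rw [e1, e2] at h
    have e3 : (f.re * e.re - f.im * -e.im) ^ 2 + (f.re * -e.im + f.im * e.re) ^ 2 = 1 := by
      linear_combination (f.re ^ 2 + f.im ^ 2) * he + hf
    have : σ * (f.re * e.re - f.im * -e.im) ^ 2 + σ⁻¹ * (f.re * -e.im + f.im * e.re) ^ 2 ≤ σ := by
      nlinarith [mul_le_mul_of_nonneg_right hσi (sq_nonneg (f.re * -e.im + f.im * e.re))]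
    nlinarith [mul_le_mul_of_nonneg_left this (by linarith : 0 ≤ α)]
  have hσ : 0 < σ := by linarith
  have hτ : 0 < τ := by linarith
  generalize (f.re * e.im - f.im * e.re) ^ 2 = X at *
  have h3 : X ≤ α * τ⁻¹ * σ⁻¹ := by
    rw [← div_eq_mul_inv _ σ, le_div_iff₀ hσ]; linarith
  have h4 : σ⁻¹ ≤ α * τ⁻¹ := by
    rw [← div_eq_mul_inv, le_div_iff₀ hτ, inv_mul_le_iff₀ hσ]; linarith
  calc X ≤ α * τ⁻¹ * σ⁻¹ := h3
    _ ≤ α * τ⁻¹ * (α * τ⁻¹) := by gcongr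
    _ = _ := by ring

/-! ### Angles and orientations -/

/-- Each line through the origin is spanned by `(cos φ, sin φ)` for some `φ ∈ [0, π)`. -/
lemma exists_angle (u : ℂ) (hu : u.re ^ 2 + u.im ^ 2 = 1) :
    ∃ φ ∈ Set.Ico 0 π, ∃ ε : ℝ, ε ^ 2 = 1 ∧ cos φ = ε * u.re ∧ sin φ = ε * u.im := by
  have hn : ‖u‖ = 1 := by
    rw [Complex.norm_def, Complex.normSq_apply, Real.sqrt_eq_one]; linarith
  have hc := Complex.norm_mul_cos_arg u
  have hs := Complex.norm_mul_sin_arg u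
  rw [hn, one_mul] at hc hs
  have hp := Complex.neg_pi_lt_arg u
  have hq := Complex.arg_le_pi u
  rcases lt_or_ge u.arg 0 with h | h
  · exact ⟨u.arg + π, ⟨by linarith, by linarith⟩, -1, by norm_num,
      by rw [Real.cos_add_pi, hc]; ring, by rw [Real.sin_add_pi, hs]; ring⟩
  · rcases hq.lt_or_eq with h' | h'
    · exact ⟨u.arg, ⟨h, h'⟩, 1, by norm_num, by rw [hc]; ring, by rw [hs]; ring⟩
    · rw [h'] at hc hs
      exact ⟨0, ⟨le_rfl, Real.pi_pos⟩, -1, by norm_num,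
        by rw [← hc]; simp, by rw [← hs]; simp⟩

/-- Directions can be oriented so that consecutive unit vectors have nonnegative inner product. -/
lemma exists_oriented (e : ℕ → ℂ) : ∃ u : ℕ → ℂ, (∀ n, u n = e n ∨ u n = -e n) ∧
    ∀ n, 0 ≤ (u n).re * (u (n + 1)).re + (u n).im * (u (n + 1)).im := by
  classical
  let u : ℕ → ℂ := fun n => Nat.rec (e 0) (fun k w =>
    if 0 ≤ w.re * (e (k + 1)).re + w.im * (e (k + 1)).im then e (k + 1) else -e (k + 1)) n
  have hu : ∀ n, u (n + 1) = if 0 ≤ (u n).re * (e (n + 1)).re + (u n).im * (e (n + 1)).im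
      then e (n + 1) else -e (n + 1) := fun n => rfl
  refine ⟨u, fun n => ?_, fun n => ?_⟩
  · cases n with
    | zero => exact Or.inl rfl
    | succ k => rw [hu]; split_ifs <;> simp
  · rw [hu]
    split_ifs with h
    · exact h
    · rw [Complex.neg_re, Complex.neg_im]; linarith

/-! ### The subordinate direction -/

/-- Last–Simon-type lemma: for SL(2,ℝ) matrices `A_n` with `‖A_n‖ ≤ B` and
`∑_{n≥1} ‖A_{n+1}‖²/t_n² < ∞` (where `t_n = ‖A_n ⋯ A_1‖`), one has `∑_{n≥1} t_n⁻² < ∞` and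
there is a direction `φ*` such that `‖T_n v_{φ*}‖² ≤ (π²/4)B⁴t_n²(∑_{m≥n} t_m⁻²)² + t_n⁻²`
for all `n ≥ 1`, and `‖T_n v_{φ*}‖/‖T_n v_{φ*}^⊥‖ → 0`. -/
theorem statement11 (A : ℕ → Matrix (Fin 2) (Fin 2) ℝ) (B : ℝ)
    (hdet : ∀ n : ℕ, 1 ≤ n → (A n).det = 1)
    (hB : ∀ n : ℕ, 1 ≤ n → opNorm (A n) ≤ B)
    (hsum : Summable (fun n : ℕ =>
      opNorm (A (n + 2)) ^ 2 / opNorm (prodMat A (n + 1)) ^ 2)) :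
    Summable (fun n : ℕ => (opNorm (prodMat A (n + 1)) ^ 2)⁻¹) ∧
    ∃ φs ∈ Set.Ico 0 π,
      (∀ n : ℕ, 1 ≤ n →
        vnorm ((prodMat A n).mulVec ![Real.cos φs, Real.sin φs]) ^ 2
          ≤ (π ^ 2 / 4) * B ^ 4 * opNorm (prodMat A n) ^ 2 *
              (∑' m : ℕ, (opNorm (prodMat A (n + m)) ^ 2)⁻¹) ^ 2 +
            (opNorm (prodMat A n) ^ 2)⁻¹) ∧
      Tendsto
        (fun n : ℕ =>
          vnorm ((prodMat A n).mulVec ![Real.cos φs, Real.sin φs]) /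
            vnorm ((prodMat A n).mulVec ![-Real.sin φs, Real.cos φs]))
        atTop (nhds 0) := by
  have hT : ∀ n, _ := fun n => exists_contracted (prodMat A n) (prodMat_det A hdet n)
  have ht1 : ∀ n, 1 ≤ opNorm (prodMat A n) ^ 2 := fun n => (hT n).1
  choose e he hTe using fun n => (hT n).2
  obtain ⟨u, hue, hdot⟩ := exists_oriented e
  have hu1 : ∀ n, (u n).re ^ 2 + (u n).im ^ 2 = 1 := by
    intro n
    rcases hue n with h | h <;> simp [h, he]
  have hTu : ∀ n x y, vnorm ((prodMat A n).mulVec ![x, y]) ^ 2 =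
      opNorm (prodMat A n) ^ 2 * ((u n).re * y - (u n).im * x) ^ 2 +
        (opNorm (prodMat A n) ^ 2)⁻¹ * ((u n).re * x + (u n).im * y) ^ 2 := by
    intro n x y
    rw [hTe]
    rcases hue n with h | h <;> rw [h]
    rw [Complex.neg_re, Complex.neg_im]
    ring
  have hA1 : ∀ n, 1 ≤ n → 1 ≤ opNorm (A n) ^ 2 :=
    fun n hn => (exists_contracted (A n) (hdet n hn)).1
  have hs1 : Summable (fun n : ℕ => (opNorm (prodMat A (n + 1)) ^ 2)⁻¹) := by
    refine hsum.of_nonneg_of_le (fun n => by positivity) fun n => ?_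
    rw [div_eq_mul_inv]
    exact le_mul_of_one_le_left (by positivity) (hA1 _ (by omega))
  have hs : Summable (fun n : ℕ => (opNorm (prodMat A n) ^ 2)⁻¹) :=
    (summable_nat_add_iff 1).1 hs1
  refine ⟨hs1, ?_⟩
  have hdist : ∀ n, dist (u n) (u (n + 1)) ≤
      √2 * B ^ 2 * (opNorm (prodMat A n) ^ 2)⁻¹ := by
    intro n
    have h := sin_sq_le (A (n + 1)) (prodMat A n) (hdet _ (by omega)) (ht1 n) (ht1 (n + 1))
      (u n) (u (n + 1)) (hu1 n) (hu1 (n + 1)) (hTu n) (hTu (n + 1))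
    have hAB : opNorm (A (n + 1)) ^ 2 ≤ B ^ 2 :=
      pow_le_pow_left₀ (opNorm_nonneg _) (hB _ (by omega)) 2
    have h' : (opNorm (A (n + 1)) ^ 2 * (opNorm (prodMat A n) ^ 2)⁻¹) ^ 2 ≤
        (B ^ 2 * (opNorm (prodMat A n) ^ 2)⁻¹) ^ 2 := by gcongr
    rw [dist_eq_norm]
    refine abs_le_of_sq_le_sq' ?_ (by positivity) |>.2
    rw [mul_assoc, mul_pow, Real.sq_sqrt (by norm_num), Complex.sq_norm, Complex.normSq_apply,
      Complex.sub_re, Complex.sub_im]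
    have hd := hdot n
    have h1 := hu1 n
    have h2 := hu1 (n + 1)
    have h3 : ((u (n + 1)).re * (u n).im - (u (n + 1)).im * (u n).re) ^ 2 +
        ((u n).re * (u (n + 1)).re + (u n).im * (u (n + 1)).im) ^ 2 = 1 := by
      linear_combination ((u n).re ^ 2 + (u n).im ^ 2) * h2 + h1
    -- `|u - w|² = 2 - 2⟨u, w⟩ ≤ 2 - 2⟨u, w⟩²`, because `0 ≤ ⟨u, w⟩ ≤ 1`.
    nlinarith [sq_nonneg ((u (n + 1)).re * (u n).im - (u (n + 1)).im * (u n).re)]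
  have hsd : Summable (fun n => √2 * B ^ 2 * (opNorm (prodMat A n) ^ 2)⁻¹) := hs.mul_left _
  obtain ⟨w, hw⟩ := cauchySeq_tendsto_of_complete (cauchySeq_of_dist_le_of_summable _ hdist hsd)
  have hw1 : w.re ^ 2 + w.im ^ 2 = 1 := by
    have h := (((Complex.continuous_re.tendsto w).comp hw).pow 2).add
      (((Complex.continuous_im.tendsto w).comp hw).pow 2)
    refine tendsto_nhds_unique h ?_
    simp [hu1]
  have hwd : ∀ n, dist (u n) w ≤
      √2 * B ^ 2 * ∑' m : ℕ, (opNorm (prodMat A (n + m)) ^ 2)⁻¹ := by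
    intro n
    rw [← tsum_mul_left]
    exact dist_le_tsum_of_dist_le_of_tendsto _ hdist hsd hw n
  obtain ⟨φ, hφ, ε, hε, hc, hsn⟩ := exists_angle w hw1
  have key : ∀ n, vnorm ((prodMat A n).mulVec ![cos φ, sin φ]) ^ 2
          ≤ (π ^ 2 / 4) * B ^ 4 * opNorm (prodMat A n) ^ 2 *
              (∑' m : ℕ, (opNorm (prodMat A (n + m)) ^ 2)⁻¹) ^ 2 +
            (opNorm (prodMat A n) ^ 2)⁻¹ := by
    intro n
    have hd := pow_le_pow_left₀ dist_nonneg (hwd n) 2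
    rw [mul_pow, mul_pow, Real.sq_sqrt (by norm_num), dist_eq_norm, Complex.sq_norm,
      Complex.normSq_apply, Complex.sub_re, Complex.sub_im] at hd
    rw [hTu, hc, hsn]
    generalize (∑' m : ℕ, (opNorm (prodMat A (n + m)) ^ 2)⁻¹) = Z at *
    have h1 := hu1 n
    have h2 := ht1 n
    generalize opNorm (prodMat A n) ^ 2 = τ at *
    generalize u n = v at *
    have e1 : (v.re * (ε * w.im) - v.im * (ε * w.re)) ^ 2 = (v.re * w.im - v.im * w.re) ^ 2 := by
      linear_combination (v.re * w.im - v.im * w.re) ^ 2 * hε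
    have e2 : (v.re * (ε * w.re) + v.im * (ε * w.im)) ^ 2 = (v.re * w.re + v.im * w.im) ^ 2 := by
      linear_combination (v.re * w.re + v.im * w.im) ^ 2 * hε
    have e3 : (v.re * w.im - v.im * w.re) ^ 2 + (v.re * w.re + v.im * w.im) ^ 2 = 1 := by
      linear_combination (v.re ^ 2 + v.im ^ 2) * hw1 + h1
    -- `sin² ≤ 2 - 2 cos = |v - w|²` for the angle between the unit vectors `v` and `w`.
    have e4 : (v.re * w.im - v.im * w.re) ^ 2 ≤ 2 * B ^ 4 * Z ^ 2 := by
      nlinarith [sq_nonneg (v.re * w.re + v.im * w.im - 1)]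
    have hπ : 2 ≤ π ^ 2 / 4 := by nlinarith [Real.pi_gt_three]
    have e5 : 2 * B ^ 4 * Z ^ 2 ≤ π ^ 2 / 4 * B ^ 4 * Z ^ 2 := by gcongr
    have e6 : (v.re * w.re + v.im * w.im) ^ 2 ≤ 1 := by
      nlinarith [sq_nonneg (v.re * w.im - v.im * w.re)]
    rw [e1, e2]
    have e7 := mul_le_mul_of_nonneg_left (e4.trans e5) (by linarith : 0 ≤ τ)
    have e8 := mul_le_mul_of_nonneg_left e6 (by positivity : 0 ≤ τ⁻¹)
    linarith
  refine ⟨φ, hφ, fun n _ => key n, ?_⟩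
  have htail : Tendsto (fun n => ∑' m : ℕ, (opNorm (prodMat A (n + m)) ^ 2)⁻¹) atTop (nhds 0) := by
    simpa only [add_comm] using
      tendsto_sum_nat_add (fun n : ℕ => (opNorm (prodMat A n) ^ 2)⁻¹)
  -- `δ n` bounds `‖T_n v‖² / t_n²`, where `v` is the limiting direction.
  let δ : ℕ → ℝ := fun n => (π ^ 2 / 4) * B ^ 4 *
    (∑' m : ℕ, (opNorm (prodMat A (n + m)) ^ 2)⁻¹) ^ 2 + ((opNorm (prodMat A n) ^ 2)⁻¹) ^ 2
  have hδ : Tendsto δ atTop (nhds 0) := by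
    have h := ((htail.pow 2).const_mul ((π ^ 2 / 4) * B ^ 4)).add
      (hs.tendsto_atTop_zero.pow 2)
    rwa [zero_pow two_ne_zero, mul_zero, add_zero] at h
  have hlim : Tendsto (fun n => √(2 * δ n)) atTop (nhds 0) := by
    simpa using (hδ.const_mul 2).sqrt
  refine squeeze_zero' (Eventually.of_forall fun n =>
    div_nonneg (Real.sqrt_nonneg _) (Real.sqrt_nonneg _)) ?_ hlim
  filter_upwards [hδ.eventually_lt_const (by norm_num : (0 : ℝ) < 1 / 2)] with n hn
  refine Real.le_sqrt_of_sq_le ?_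
  have h2 := ht1 n
  have hg : vnorm ((prodMat A n).mulVec ![cos φ, sin φ]) ^ 2 ≤ opNorm (prodMat A n) ^ 2 * δ n := by
    refine (key n).trans (le_of_eq ?_)
    simp only [δ]
    have : (opNorm (prodMat A n) ^ 2) ≠ 0 := by positivity
    generalize opNorm (prodMat A n) ^ 2 = τ at *
    field_simp
  have hgh : vnorm ((prodMat A n).mulVec ![cos φ, sin φ]) ^ 2 +
      vnorm ((prodMat A n).mulVec ![-sin φ, cos φ]) ^ 2 =
      opNorm (prodMat A n) ^ 2 + (opNorm (prodMat A n) ^ 2)⁻¹ := by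
    rw [hTu, hTu]
    have h1 := hu1 n
    have h3 := Real.sin_sq_add_cos_sq φ
    linear_combination (opNorm (prodMat A n) ^ 2 + (opNorm (prodMat A n) ^ 2)⁻¹) *
      (((u n).re ^ 2 + (u n).im ^ 2) * h3 + h1)
  have hi : 0 ≤ (opNorm (prodMat A n) ^ 2)⁻¹ := by positivity
  have hδ0 : 0 ≤ δ n := by simp only [δ]; positivity
  rw [div_pow]
  generalize opNorm (prodMat A n) ^ 2 = τ at *
  have hh : τ / 2 ≤ vnorm ((prodMat A n).mulVec ![-sin φ, cos φ]) ^ 2 := by nlinarith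
  rw [div_le_iff₀ (by linarith)]
  nlinarith
end

section
/- Let p ∈ (0,1), let β ≥ 2 be an integer, let a₁ = β − 1 and a_n = a_{n−1} + β^n for n ≥ 2, and define p_k = p if k = a_n for some n ≥ 1, p_k = 1 otherwise (p_{−1} = 1). Let λ = 2 cos φ with φ ∈ (0, π) and set t_n = ‖T(a_n + 1; λ)‖. If Σ_{n≥1} β^n t_n^{−2} < ∞ and Σ_{n≥1} β^n t_n² (Σ_{m=n}^{∞} t_m^{−2})² < ∞, then the eigenvalue equation at λ has a nonzero ℓ² solution. -/
/-!
The vector `(u_{k+1}, u_k)` equals `T(k) x`, where `x = (u_0, u_{-1})`, so the task is to find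
a unit vector `x` for which `‖T(k) x‖` is small.

* Between two sparse sites the recurrence is free, and the quadratic form
  `X² + Y² - λ X Y`, which is comparable to `X² + Y²` since `|λ| < 2`, is conserved
  (`freeForm_const`). A sparse site costs only a bounded factor. Writing `A_n = T(a_n + 1)`, this
  gives `‖A_n x‖ ≤ K ‖A_{n+1} x‖`, and it bounds the `β^(n+1)` values `u_k²` in the block
  `a_n < k ≤ a_{n+1}` by a multiple of `‖A_n x‖²`.
* As `det A_n = 1`, there is a unit vector `v_n` with `‖A_n v_n‖ ≤ 2 / t_n`
  (`exists_contracted`). The wedge of `v_n` and `v_{n+1}` is that of `A_n v_n` and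
  `A_n v_{n+1}`, hence `O(t_n⁻²)` (`exists_decomp`). Telescoping,
  `‖A_n v_m‖ ≤ 2 / t_n + C t_n ∑_{n ≤ j < m} t_j⁻²` for `m ≥ n`. Any limit point of `(v_m)` on
  the unit circle inherits these bounds for all `n` (`exists_subordinate`); compactness replaces
  a proof that the directions converge.

Squaring, multiplying by `β^(n+1)` and summing, the two hypotheses give the `ℓ²` bound.
-/

open Real

/-- The sparse positions: `a₁ = β - 1`, `a_n = a_{n-1} + β^n` for `n ≥ 2`. -/
def aseq (β : ℕ) : ℕ → ℕ
  | 0 => 0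
  | 1 => β - 1
  | (j + 2) => aseq β (j + 1) + β ^ (j + 2)

-- The coupling `p_k`: `p_k = p` if `k = a_n` for some `n ≥ 1`, else `1`.
open Classical in
noncomputable def pcoefD (p : ℝ) (β : ℕ) (n : ℤ) : ℝ :=
  if ∃ j : ℕ, 1 ≤ j ∧ n = (aseq β j : ℤ) then p else 1

/-- The one-step transfer matrix `T(k, k-1; λ) = [[λ/p_k, -p_{k-1}/p_k], [1, 0]]`. -/
noncomputable def TstepD (p : ℝ) (β : ℕ) (lam : ℝ) (n : ℕ) : Matrix (Fin 2) (Fin 2) ℝ :=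
  !![lam / pcoefD p β n, -pcoefD p β ((n : ℤ) - 1) / pcoefD p β n; 1, 0]

/-- The product `T(k; λ) = T(k, k-1; λ) ⋯ T(0, -1; λ)`. -/
noncomputable def TmatD (p : ℝ) (β : ℕ) (lam : ℝ) : ℕ → Matrix (Fin 2) (Fin 2) ℝ
  | 0 => TstepD p β lam 0
  | (n + 1) => TstepD p β lam (n + 1) * TmatD p β lam n

/-- A (not identically zero) solution of the eigenvalue equation
`p_k u_{k+1} + p_{k-1} u_{k-1} = λ u_k`, `k ≥ 0`. -/
def IsSolution (pc : ℤ → ℝ) (lam : ℝ) (u : ℤ → ℝ) : Prop :=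
  (∃ k : ℤ, -1 ≤ k ∧ u k ≠ 0) ∧
  ∀ k : ℤ, 0 ≤ k → pc k * u (k + 1) + pc (k - 1) * u (k - 1) = lam * u k

/-! ### Unimodular 2×2 matrices -/

/-- The action of a 2×2 matrix on the Euclidean plane. -/
noncomputable def act (A : Matrix (Fin 2) (Fin 2) ℝ) :
    EuclideanSpace ℝ (Fin 2) →L[ℝ] EuclideanSpace ℝ (Fin 2) :=
  Matrix.toEuclideanCLM (𝕜 := ℝ) (n := Fin 2) A

lemma act_zero (A : Matrix (Fin 2) (Fin 2) ℝ) (x : EuclideanSpace ℝ (Fin 2)) :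
    act A x 0 = A 0 0 * x 0 + A 0 1 * x 1 := by
  simp [act, Matrix.ofLp_toEuclideanCLM, Matrix.mulVec, dotProduct, Fin.sum_univ_two]

lemma act_one (A : Matrix (Fin 2) (Fin 2) ℝ) (x : EuclideanSpace ℝ (Fin 2)) :
    act A x 1 = A 1 0 * x 0 + A 1 1 * x 1 := by
  simp [act, Matrix.ofLp_toEuclideanCLM, Matrix.mulVec, dotProduct, Fin.sum_univ_two]

lemma normSq_eq (x : EuclideanSpace ℝ (Fin 2)) : ‖x‖ ^ 2 = x 0 ^ 2 + x 1 ^ 2 := by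
  simp [EuclideanSpace.norm_sq_eq, Fin.sum_univ_two]

/-- The operator norm is at most the Frobenius norm. -/
lemma norm_act_sq_le (A : Matrix (Fin 2) (Fin 2) ℝ) :
    ‖act A‖ ^ 2 ≤ A 0 0 ^ 2 + A 0 1 ^ 2 + A 1 0 ^ 2 + A 1 1 ^ 2 := by
  have h : ‖act A‖ ≤ √(A 0 0 ^ 2 + A 0 1 ^ 2 + A 1 0 ^ 2 + A 1 1 ^ 2) := by
    refine ContinuousLinearMap.opNorm_le_bound _ (Real.sqrt_nonneg _) fun x => ?_
    refine abs_le_of_sq_le_sq' ?_ (by positivity) |>.2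
    rw [mul_pow, Real.sq_sqrt (by positivity), normSq_eq, normSq_eq, act_zero, act_one]
    nlinarith [sq_nonneg (A 0 0 * x 1 - A 0 1 * x 0), sq_nonneg (A 1 0 * x 1 - A 1 1 * x 0)]
  calc ‖act A‖ ^ 2 ≤ √(A 0 0 ^ 2 + A 0 1 ^ 2 + A 1 0 ^ 2 + A 1 1 ^ 2) ^ 2 := by gcongr
    _ = _ := Real.sq_sqrt (by positivity)

lemma norm_act_pos {A : Matrix (Fin 2) (Fin 2) ℝ} (hA : A.det = 1) : 0 < ‖act A‖ := by
  rw [norm_pos_iff]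
  intro h
  have : A = 0 := by
    have h' : Matrix.toEuclideanCLM (𝕜 := ℝ) (n := Fin 2) A = 0 := h
    simpa using h'
  rw [this] at hA
  simp at hA

/-- A unimodular matrix contracts some unit vector about as much as it can stretch one: of the two
columns of the adjugate, which `A` sends to the standard basis vectors, normalize the longer. -/
lemma exists_contracted_s12 {A : Matrix (Fin 2) (Fin 2) ℝ} (hA : A.det = 1) :
    ∃ v, ‖v‖ = 1 ∧ ‖act A v‖ ≤ 2 / ‖act A‖ := by
  have hpos := norm_act_pos hA
  have hF := norm_act_sq_le A
  have key : ∀ w : EuclideanSpace ℝ (Fin 2), ‖act A w‖ = 1 → ‖act A‖ ^ 2 ≤ 2 * ‖w‖ ^ 2 →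
      ∃ v, ‖v‖ = 1 ∧ ‖act A v‖ ≤ 2 / ‖act A‖ := by
    intro w h1 h2
    have hw : 0 < ‖w‖ := by
      rcases (norm_nonneg w).eq_or_lt with h | h
      · rw [← h] at h2
        nlinarith
      · exact h
    refine ⟨‖w‖⁻¹ • w, by rw [norm_smul, norm_inv, norm_norm, inv_mul_cancel₀ hw.ne'], ?_⟩
    rw [map_smul, norm_smul, norm_inv, norm_norm, h1, mul_one, le_div_iff₀ hpos,
      inv_mul_le_iff₀ hw]
    nlinarith
  rw [Matrix.det_fin_two] at hA
  have unit : ∀ x : EuclideanSpace ℝ (Fin 2), x 0 ^ 2 + x 1 ^ 2 = 1 → ‖x‖ = 1 := by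
    intro x hx
    rw [← normSq_eq] at hx
    have := norm_nonneg x
    nlinarith
  rcases le_total (A 0 0 ^ 2 + A 0 1 ^ 2) (A 1 0 ^ 2 + A 1 1 ^ 2) with h | h
  · refine key !₂[A 1 1, -A 1 0] (unit _ ?_) ?_
    · rw [act_zero, act_one]
      simp
      rw [show A 0 0 * A 1 1 + -(A 0 1 * A 1 0) = 1 by linarith,
        show A 1 0 * A 1 1 + -(A 1 1 * A 1 0) = 0 by ring]
      norm_num
    · rw [normSq_eq]
      simp
      linarith
  · refine key !₂[-A 0 1, A 0 0] (unit _ ?_) ?_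
    · rw [act_zero, act_one]
      simp
      rw [show -(A 0 0 * A 0 1) + A 0 1 * A 0 0 = 0 by ring,
        show -(A 1 0 * A 0 1) + A 1 1 * A 0 0 = 1 by linarith]
      norm_num
    · rw [normSq_eq]
      simp
      linarith

/-- The component of `w` orthogonal to `v` is the wedge of `v` and `w`, which a unimodular matrix
preserves. -/
lemma exists_decomp {A : Matrix (Fin 2) (Fin 2) ℝ} (hA : A.det = 1)
    (v w : EuclideanSpace ℝ (Fin 2)) (hv : ‖v‖ = 1) (hw : ‖w‖ = 1) :
    ∃ (c s : ℝ) (z : EuclideanSpace ℝ (Fin 2)), ‖z‖ = 1 ∧ |c| ≤ 1 ∧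
      |s| ≤ ‖act A v‖ * ‖act A w‖ ∧ w = c • v + s • z := by
  have hv2 : v 0 ^ 2 + v 1 ^ 2 = 1 := by rw [← normSq_eq, hv]; norm_num
  have hw2 : w 0 ^ 2 + w 1 ^ 2 = 1 := by rw [← normSq_eq, hw]; norm_num
  refine ⟨v 0 * w 0 + v 1 * w 1, v 0 * w 1 - v 1 * w 0, !₂[-v 1, v 0], ?_, ?_, ?_, ?_⟩
  · have h := normSq_eq !₂[-v 1, v 0]
    simp at h
    have := norm_nonneg !₂[-v 1, v 0]
    nlinarith
  · rw [abs_le]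
    constructor
    · nlinarith [sq_nonneg (v 0 + w 0), sq_nonneg (v 1 + w 1)]
    · nlinarith [sq_nonneg (v 0 - w 0), sq_nonneg (v 1 - w 1)]
  · refine abs_le_of_sq_le_sq ?_ (by positivity)
    rw [mul_pow, normSq_eq, normSq_eq]
    have : v 0 * w 1 - v 1 * w 0 = act A v 0 * act A w 1 - act A v 1 * act A w 0 := by
      rw [act_zero, act_one, act_zero, act_one]
      rw [Matrix.det_fin_two] at hA
      linear_combination (-(v 0 * w 1 - v 1 * w 0)) * hA
    rw [this]
    nlinarith [sq_nonneg (act A v 0 * act A w 0 + act A v 1 * act A w 1)]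
  · ext i
    fin_cases i
    · simp
      linear_combination (-w 0) * hv2
    · simp
      linear_combination (-w 1) * hv2

/-! ### A common contracted direction -/

/-- If unimodular `A n` satisfy `‖A n x‖ ≤ K ‖A (n+1) x‖` and `∑ ‖A n‖⁻² < ∞`, then one unit vector
is almost optimally contracted by every `A n`. -/
lemma exists_subordinate (A : ℕ → Matrix (Fin 2) (Fin 2) ℝ) (hA : ∀ n, (A n).det = 1)
    (K : ℝ) (hK : 0 ≤ K) (hgrow : ∀ n x, ‖act (A n) x‖ ≤ K * ‖act (A (n + 1)) x‖)
    (hs : Summable fun n => (‖act (A n)‖ ^ 2)⁻¹) :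
    ∃ x, ‖x‖ = 1 ∧ ∀ n, ‖act (A n) x‖ ≤ 2 / ‖act (A n)‖ +
      4 * K ^ 2 * ‖act (A n)‖ * ∑' m, (‖act (A (n + m))‖ ^ 2)⁻¹ := by
  choose v hv1 hv2 using fun n => exists_contracted_s12 (hA n)
  have hpos := fun n => norm_act_pos (hA n)
  have hnorm : ∀ n, ‖act (A n)‖ ≤ K * ‖act (A (n + 1))‖ := fun n =>
    ContinuousLinearMap.opNorm_le_bound _ (by positivity) fun x =>
      (hgrow n x).trans (by
        rw [mul_assoc]
        exact mul_le_mul_of_nonneg_left (ContinuousLinearMap.le_opNorm _ _) hK)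
  have hwedge : ∀ n, ‖act (A n) (v n)‖ * ‖act (A n) (v (n + 1))‖ ≤
      4 * K ^ 2 * (‖act (A n)‖ ^ 2)⁻¹ := by
    intro n
    have h1 : ‖act (A n) (v (n + 1))‖ ≤ 2 * K ^ 2 / ‖act (A n)‖ := by
      refine (hgrow n _).trans ((mul_le_mul_of_nonneg_left (hv2 (n + 1)) hK).trans ?_)
      rw [le_div_iff₀ (hpos n), mul_div_assoc', div_mul_eq_mul_div, div_le_iff₀ (hpos _)]
      nlinarith [mul_le_mul_of_nonneg_left (hnorm n) hK]
    calc _ ≤ (2 / ‖act (A n)‖) * (2 * K ^ 2 / ‖act (A n)‖) := by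
          gcongr
          exact hv2 n
      _ = _ := by
          have := (hpos n).ne'
          field_simp
          ring
  have hstep : ∀ n j, ‖act (A n) (v (j + 1))‖ ≤
      ‖act (A n) (v j)‖ + 4 * K ^ 2 * ‖act (A n)‖ * (‖act (A j)‖ ^ 2)⁻¹ := by
    intro n j
    obtain ⟨c, s, z, hz, hc, hs', he⟩ := exists_decomp (hA j) (v j) (v (j + 1)) (hv1 _) (hv1 _)
    rw [he, map_add, map_smul, map_smul]
    refine (norm_add_le _ _).trans (add_le_add ?_ ?_)
    · rw [norm_smul, Real.norm_eq_abs]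
      exact mul_le_of_le_one_left (norm_nonneg _) hc
    · rw [norm_smul, Real.norm_eq_abs]
      have hz' : ‖act (A n) z‖ ≤ ‖act (A n)‖ := by
        simpa [hz] using (act (A n)).le_opNorm z
      calc |s| * ‖act (A n) z‖ ≤ (4 * K ^ 2 * (‖act (A j)‖ ^ 2)⁻¹) * ‖act (A n)‖ :=
            mul_le_mul (hs'.trans (hwedge j)) hz' (norm_nonneg _) (by positivity)
        _ = _ := by ring
  have htele : ∀ n m, ‖act (A n) (v (n + m))‖ ≤ 2 / ‖act (A n)‖ +
      4 * K ^ 2 * ‖act (A n)‖ * ∑ j ∈ Finset.range m, (‖act (A (n + j))‖ ^ 2)⁻¹ := by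
    intro n m
    induction m with
    | zero => simpa using hv2 n
    | succ m ih =>
      rw [Finset.sum_range_succ, mul_add, ← add_assoc, ← add_assoc]
      exact (hstep n (n + m)).trans (by gcongr)
  have htail : ∀ n, Summable fun m => (‖act (A (n + m))‖ ^ 2)⁻¹ := by
    intro n
    have := (summable_nat_add_iff n).2 hs
    simpa [add_comm] using this
  obtain ⟨x, hx, f, hf, hlim⟩ := (isCompact_sphere (0 : EuclideanSpace ℝ (Fin 2)) 1).tendsto_subseq
    (x := v) (fun n => by simpa using hv1 n)
  refine ⟨x, by simpa using hx, fun n => ?_⟩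
  have hl : Filter.Tendsto (fun i => ‖act (A n) (v (f i))‖) Filter.atTop
      (nhds ‖act (A n) x‖) := (((act (A n)).continuous.norm).tendsto x).comp hlim
  refine le_of_tendsto hl ?_
  filter_upwards [Filter.eventually_ge_atTop n] with i hi
  obtain ⟨m, hm⟩ := Nat.exists_eq_add_of_le (hi.trans hf.le_apply)
  rw [hm]
  refine (htele n m).trans ?_
  have := (htail n).sum_le_tsum (Finset.range m) (fun j _ => by positivity)
  gcongr

/-! ### The sparse positions -/

lemma aseq_succ (β n : ℕ) (hn : 1 ≤ n) : aseq β (n + 1) = aseq β n + β ^ (n + 1) := by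
  obtain ⟨m, rfl⟩ : ∃ m, n = m + 1 := ⟨n - 1, by omega⟩
  rfl

lemma four_le_pow {β : ℕ} (hβ : 2 ≤ β) {n : ℕ} (hn : 1 ≤ n) : 4 ≤ β ^ (n + 1) :=
  calc 4 = 2 ^ 2 := rfl
    _ ≤ β ^ 2 := Nat.pow_le_pow_left hβ 2
    _ ≤ β ^ (n + 1) := Nat.pow_le_pow_right (by omega) (by omega)

lemma aseq_mono {β i j : ℕ} (hi : 1 ≤ i) (hij : i ≤ j) : aseq β i ≤ aseq β j := by
  induction j, hij using Nat.le_induction with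
  | base => exact le_rfl
  | succ j hj ih =>
    rw [aseq_succ β j (by omega)]
    omega

lemma le_aseq {β : ℕ} (hβ : 2 ≤ β) (n : ℕ) : n ≤ aseq β (n + 1) := by
  induction n with
  | zero => omega
  | succ n ih =>
    have := four_le_pow hβ (n := n + 1) (by omega)
    rw [aseq_succ β (n + 1) (by omega)]
    omega

lemma pcoef_eq_one {p : ℝ} {β n : ℕ} (hn : 1 ≤ n) {k : ℕ} (h1 : aseq β n < k)
    (h2 : k < aseq β (n + 1)) : pcoefD p β k = 1 := by
  unfold pcoefD
  rw [if_neg]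
  rintro ⟨j, hj, hk⟩
  have hk : k = aseq β j := by exact_mod_cast hk
  rcases le_or_gt j n with h | h
  · have := aseq_mono (β := β) hj h
    omega
  · have := aseq_mono (β := β) (i := n + 1) (by omega) h
    omega

lemma pcoef_neg_one (p : ℝ) (β : ℕ) : pcoefD p β (-1) = 1 := by
  unfold pcoefD
  rw [if_neg]
  rintro ⟨j, -, hk⟩
  omega

lemma pcoef_bounds {p : ℝ} (hp : p ∈ Set.Ioo (0 : ℝ) 1) (β : ℕ) (k : ℤ) :
    p ≤ pcoefD p β k ∧ pcoefD p β k ≤ 1 := by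
  unfold pcoefD
  split_ifs
  · exact ⟨le_rfl, hp.2.le⟩
  · exact ⟨hp.2.le, le_rfl⟩

lemma pcoef_pos {p : ℝ} (hp : p ∈ Set.Ioo (0 : ℝ) 1) (β : ℕ) (k : ℤ) : 0 < pcoefD p β k :=
  hp.1.trans_le (pcoef_bounds hp β k).1

/-! ### The solution with given initial data -/

/-- The vector `(u_{k+1}, u_k)` of the solution with initial data `x = (u_0, u_{-1})`. -/
noncomputable def state (p : ℝ) (β : ℕ) (lam : ℝ) (x : EuclideanSpace ℝ (Fin 2)) (k : ℕ) :
    EuclideanSpace ℝ (Fin 2) :=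
  act (TmatD p β lam k) x

lemma state_succ_one (p : ℝ) (β : ℕ) (lam : ℝ) (x : EuclideanSpace ℝ (Fin 2)) (k : ℕ) :
    state p β lam x (k + 1) 1 = state p β lam x k 0 := by
  simp only [state, act_one, act_zero, TmatD, TstepD, Matrix.mul_apply, Fin.sum_univ_two]
  simp

lemma state_succ_zero {p : ℝ} (hp : p ∈ Set.Ioo (0 : ℝ) 1) (β : ℕ) (lam : ℝ)
    (x : EuclideanSpace ℝ (Fin 2)) (k : ℕ) :
    pcoefD p β (k + 1 : ℕ) * state p β lam x (k + 1) 0 =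
      lam * state p β lam x k 0 - pcoefD p β k * state p β lam x k 1 := by
  have h := (pcoef_pos hp β (k + 1 : ℕ)).ne'
  simp only [state, act_one, act_zero, TmatD, TstepD, Matrix.mul_apply, Fin.sum_univ_two]
  push_cast at h ⊢
  simp
  field_simp
  ring

lemma state_zero_one (p : ℝ) (β : ℕ) (lam : ℝ) (x : EuclideanSpace ℝ (Fin 2)) :
    state p β lam x 0 1 = x 0 := by
  simp [state, act_one, TmatD, TstepD]

lemma state_zero_zero {p : ℝ} (hp : p ∈ Set.Ioo (0 : ℝ) 1) (β : ℕ) (lam : ℝ)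
    (x : EuclideanSpace ℝ (Fin 2)) :
    pcoefD p β 0 * state p β lam x 0 0 = lam * x 0 - x 1 := by
  have h := (pcoef_pos hp β 0).ne'
  simp [state, act_zero, TmatD, TstepD, pcoef_neg_one]
  field_simp
  ring

lemma det_Tmat {p : ℝ} (hp : p ∈ Set.Ioo (0 : ℝ) 1) (β : ℕ) (lam : ℝ) (k : ℕ) :
    (TmatD p β lam k).det = 1 / pcoefD p β k := by
  induction k with
  | zero => simp [TmatD, TstepD, Matrix.det_fin_two, pcoef_neg_one, neg_div]
  | succ k ih =>
    have h := (pcoef_pos hp β k).ne'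
    rw [TmatD, Matrix.det_mul, ih]
    simp [TstepD, Matrix.det_fin_two]
    field_simp

/-! ### Growth between consecutive sparse positions -/

/-- A single step backwards expands by at most a constant factor. -/
lemma normSq_state_le {p : ℝ} (hp : p ∈ Set.Ioo (0 : ℝ) 1) (β : ℕ) {lam : ℝ} (hl : |lam| < 2)
    (x : EuclideanSpace ℝ (Fin 2)) (k : ℕ) :
    ‖state p β lam x k‖ ^ 2 ≤ 10 / p ^ 2 * ‖state p β lam x (k + 1)‖ ^ 2 := by
  rw [normSq_eq, normSq_eq, state_succ_one]
  have h := state_succ_zero hp β lam x k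
  set X := state p β lam x k 0
  set Y := state p β lam x k 1
  set Z := state p β lam x (k + 1) 0
  obtain ⟨hq, hq1⟩ := pcoef_bounds hp β k
  obtain ⟨hr, hr1⟩ := pcoef_bounds hp β (k + 1 : ℕ)
  set q := pcoefD p β k
  set r := pcoefD p β (k + 1 : ℕ)
  have hp0 := hp.1
  have hp1 := hp.2
  rw [div_mul_eq_mul_div, le_div_iff₀ (by positivity)]
  have hl2 : lam ^ 2 ≤ 4 := by
    rw [abs_lt] at hl
    nlinarith
  have h1 : p ^ 2 * Y ^ 2 ≤ (q * Y) ^ 2 := by rw [mul_pow]; gcongr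
  have h2 : (r * Z) ^ 2 ≤ Z ^ 2 := by
    rw [mul_pow]
    exact mul_le_of_le_one_left (sq_nonneg _) (by nlinarith)
  have h3 : (q * Y) ^ 2 ≤ 2 * (lam * X) ^ 2 + 2 * (r * Z) ^ 2 := by
    rw [show q * Y = lam * X - r * Z by linarith]
    nlinarith [sq_nonneg (lam * X + r * Z)]
  have h4 : (lam * X) ^ 2 ≤ 4 * X ^ 2 := by rw [mul_pow]; gcongr
  have h5 : p ^ 2 * X ^ 2 ≤ X ^ 2 := mul_le_of_le_one_left (sq_nonneg _) (by nlinarith)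
  nlinarith [sq_nonneg Z]

/-- The quadratic form invariant under free propagation `(X, Y) ↦ (λ X - Y, X)`. -/
noncomputable def freeForm (lam : ℝ) (y : EuclideanSpace ℝ (Fin 2)) : ℝ :=
  y 0 ^ 2 + y 1 ^ 2 - lam * y 0 * y 1

lemma freeForm_bounds {lam : ℝ} (hl : |lam| < 2) (y : EuclideanSpace ℝ (Fin 2)) :
    (1 - |lam| / 2) * ‖y‖ ^ 2 ≤ freeForm lam y ∧ freeForm lam y ≤ 2 * ‖y‖ ^ 2 := by
  rw [normSq_eq, freeForm]
  have h : |lam * y 0 * y 1| ≤ |lam| / 2 * (y 0 ^ 2 + y 1 ^ 2) := by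
    rw [mul_assoc, abs_mul, div_mul_eq_mul_div, mul_div_assoc]
    refine mul_le_mul_of_nonneg_left ?_ (abs_nonneg _)
    rw [abs_le]
    constructor
    · nlinarith [sq_nonneg (y 0 + y 1)]
    · nlinarith [sq_nonneg (y 0 - y 1)]
  rw [abs_le] at h
  constructor
  · nlinarith
  · nlinarith [sq_nonneg (y 0), sq_nonneg (y 1)]

lemma freeForm_const {p : ℝ} (hp : p ∈ Set.Ioo (0 : ℝ) 1) {β n : ℕ} (hn : 1 ≤ n) (lam : ℝ)
    (x : EuclideanSpace ℝ (Fin 2)) (k : ℕ) (hk : aseq β n + 1 + k < aseq β (n + 1)) :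
    freeForm lam (state p β lam x (aseq β n + 1 + k)) =
      freeForm lam (state p β lam x (aseq β n + 1)) := by
  induction k with
  | zero => rfl
  | succ k ih =>
    rw [← ih (by omega), ← add_assoc]
    have h := state_succ_zero hp β lam x (aseq β n + 1 + k)
    rw [pcoef_eq_one hn (by omega) (by omega), pcoef_eq_one hn (by omega) (by omega), one_mul,
      one_mul] at h
    rw [freeForm, freeForm, state_succ_one, h]
    ring

lemma normSq_le_of_freeForm {lam : ℝ} (hl : |lam| < 2) {y z : EuclideanSpace ℝ (Fin 2)}
    (h : freeForm lam y = freeForm lam z) : ‖y‖ ^ 2 ≤ 2 / (1 - |lam| / 2) * ‖z‖ ^ 2 := by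
  have hd : 0 < 1 - |lam| / 2 := by linarith
  rw [div_mul_eq_mul_div, le_div_iff₀ hd]
  linarith [(freeForm_bounds hl y).1, (freeForm_bounds hl z).2]

lemma normSq_block {p : ℝ} (hp : p ∈ Set.Ioo (0 : ℝ) 1) {β : ℕ} (hβ : 2 ≤ β) {lam : ℝ}
    (hl : |lam| < 2) (x : EuclideanSpace ℝ (Fin 2)) {n : ℕ} (hn : 1 ≤ n) :
    ‖state p β lam x (aseq β n + 1)‖ ^ 2 ≤ 2 / (1 - |lam| / 2) * (10 / p ^ 2) ^ 2 *
      ‖state p β lam x (aseq β (n + 1) + 1)‖ ^ 2 := by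
  have hd : 0 < 1 - |lam| / 2 := by linarith
  have h4 := four_le_pow hβ hn
  have ha := aseq_succ β n hn
  -- the last index of the block before the next sparse site is `a_{n+1} - 1`
  obtain ⟨k, hk⟩ : ∃ k, aseq β (n + 1) = aseq β n + 1 + k + 1 := ⟨β ^ (n + 1) - 2, by omega⟩
  have h1 := normSq_le_of_freeForm hl
    (freeForm_const hp (β := β) hn lam x k (by omega)).symm
  have h2 := normSq_state_le hp β hl x (aseq β n + 1 + k)
  have h3 := normSq_state_le hp β hl x (aseq β n + 1 + k + 1)
  rw [hk]
  calc _ ≤ _ := h1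
    _ ≤ 2 / (1 - |lam| / 2) * (10 / p ^ 2 * (10 / p ^ 2 *
        ‖state p β lam x (aseq β n + 1 + k + 1 + 1)‖ ^ 2)) := by
      refine mul_le_mul_of_nonneg_left (h2.trans ?_) (by positivity)
      exact mul_le_mul_of_nonneg_left h3 (by positivity)
    _ = _ := by ring

/-- For `a_n < k ≤ a_{n+1}` the value `u_k` is controlled by the vector at `a_n + 1`; at
`k = a_{n+1}` it is read off as the first entry of the vector at `a_{n+1} - 1`. -/
lemma sq_block {p : ℝ} (hp : p ∈ Set.Ioo (0 : ℝ) 1) {β : ℕ} (hβ : 2 ≤ β) {lam : ℝ}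
    (hl : |lam| < 2) (x : EuclideanSpace ℝ (Fin 2)) {n : ℕ} (hn : 1 ≤ n) (i : ℕ)
    (hi : i < β ^ (n + 1)) :
    state p β lam x (aseq β n + 1 + i) 1 ^ 2 ≤
      2 / (1 - |lam| / 2) * ‖state p β lam x (aseq β n + 1)‖ ^ 2 := by
  have h4 := four_le_pow hβ hn
  have ha := aseq_succ β n hn
  by_cases h : i + 1 < β ^ (n + 1)
  · refine le_trans ?_ (normSq_le_of_freeForm hl
      (freeForm_const hp (β := β) hn lam x i (by omega)))
    rw [normSq_eq]
    nlinarith [sq_nonneg (state p β lam x (aseq β n + 1 + i) 0)]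
  · obtain ⟨j, rfl⟩ : ∃ j, i = j + 1 := ⟨i - 1, by omega⟩
    refine le_trans ?_ (normSq_le_of_freeForm hl
      (freeForm_const hp (β := β) hn lam x j (by omega)))
    rw [normSq_eq, ← add_assoc, state_succ_one]
    nlinarith [sq_nonneg (state p β lam x (aseq β n + 1 + j) 1)]

/-! ### Square summability -/

lemma summable_of_blocks {β : ℕ} (hβ : 2 ≤ β) (f b : ℕ → ℝ) (hf : ∀ k, 0 ≤ f k)
    (hb0 : ∀ n, 0 ≤ b n)
    (hb : ∀ n i, i < β ^ (n + 2) → f (aseq β (n + 1) + 1 + i) ≤ b n)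
    (hs : Summable fun n => (β : ℝ) ^ (n + 2) * b n) : Summable f := by
  have key : ∀ n, ∑ k ∈ Finset.range (aseq β (n + 1) + 1), f k ≤
      ∑ k ∈ Finset.range (aseq β 1 + 1), f k +
        ∑ j ∈ Finset.range n, (β : ℝ) ^ (j + 2) * b j := by
    intro n
    induction n with
    | zero => simp
    | succ n ih =>
      rw [aseq_succ β (n + 1) (by omega), add_right_comm, Finset.sum_range_add,
        Finset.sum_range_succ _ n, ← add_assoc]
      refine add_le_add ih ?_
      refine (Finset.sum_le_card_nsmul _ _ (b n)
        fun i hi => hb n i (Finset.mem_range.1 hi)).trans ?_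
      simp
  refine summable_of_sum_range_le (c := ∑ k ∈ Finset.range (aseq β 1 + 1), f k +
    ∑' j, (β : ℝ) ^ (j + 2) * b j) hf fun m => ?_
  calc _ ≤ ∑ k ∈ Finset.range (aseq β (m + 1) + 1), f k :=
        Finset.sum_le_sum_of_subset_of_nonneg
          (Finset.range_mono (by have := le_aseq hβ m; omega)) fun _ _ _ => hf _
    _ ≤ _ := key m
    _ ≤ _ := by
      have := hs.sum_le_tsum (Finset.range m) fun j _ => mul_nonneg (by positivity) (hb0 j)
      linarith

/-- The sequence `u` on `ℤ` with initial data `x = (u_0, u_{-1})`; indices below `-1` are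
irrelevant and carry the value `u_{-1}`. -/
noncomputable def sol (p : ℝ) (β : ℕ) (lam : ℝ) (x : EuclideanSpace ℝ (Fin 2)) : ℤ → ℝ
  | Int.ofNat k => state p β lam x k 1
  | Int.negSucc _ => x 1

lemma sol_natCast (p : ℝ) (β : ℕ) (lam : ℝ) (x : EuclideanSpace ℝ (Fin 2)) (k : ℕ) :
    sol p β lam x (k : ℤ) = state p β lam x k 1 := rfl

lemma isSolution_sol {p : ℝ} (hp : p ∈ Set.Ioo (0 : ℝ) 1) (β : ℕ) (lam : ℝ)
    {x : EuclideanSpace ℝ (Fin 2)} (hx : ‖x‖ = 1) :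
    IsSolution (pcoefD p β) lam (sol p β lam x) := by
  have hneg : sol p β lam x (-1) = x 1 := rfl
  have hzero : sol p β lam x 0 = x 0 := state_zero_one p β lam x
  constructor
  · by_contra! h
    have h0 := h 0 (by norm_num)
    have h1 := h (-1) le_rfl
    rw [hneg] at h1
    rw [hzero] at h0
    have := normSq_eq x
    rw [hx, h0, h1] at this
    norm_num at this
  · intro k hk
    lift k to ℕ using hk
    rcases k with _ | k
    · have h1 : sol p β lam x 1 = state p β lam x 0 0 := state_succ_one p β lam x 0
      have h := state_zero_zero hp β lam x
      simp only [Nat.cast_zero, zero_add, zero_sub, hneg, hzero, h1, pcoef_neg_one]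
      linarith
    · have e1 : ((k + 1 : ℕ) : ℤ) + 1 = ((k + 1 + 1 : ℕ) : ℤ) := by push_cast; ring
      have e2 : ((k + 1 : ℕ) : ℤ) - 1 = (k : ℤ) := by push_cast; ring
      rw [e1, e2, sol_natCast, sol_natCast, sol_natCast, state_succ_one, state_succ_zero hp,
        state_succ_one]
      ring

/-- Improved criterion for point spectrum: if `∑_{n≥1} β^n t_n⁻² < ∞` and
`∑_{n≥1} β^n t_n² (∑_{m≥n} t_m⁻²)² < ∞`, where `t_n = ‖T(a_n + 1; λ)‖`, then the eigenvalue
equation at `λ = 2 cos φ` has a nonzero ℓ² solution. -/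
theorem statement12 (p φ : ℝ) (hp : p ∈ Set.Ioo (0 : ℝ) 1) (hφ : φ ∈ Set.Ioo 0 π)
    (β : ℕ) (hβ : 2 ≤ β) (lam : ℝ) (hlam : lam = 2 * Real.cos φ)
    (t : ℕ → ℝ) (htdef : ∀ n : ℕ, t n = opNorm (TmatD p β lam (aseq β n + 1)))
    (h1 : Summable (fun n : ℕ => (β : ℝ) ^ (n + 1) * (t (n + 1) ^ 2)⁻¹))
    (h2 : Summable (fun n : ℕ => (β : ℝ) ^ (n + 1) * t (n + 1) ^ 2 *
      (∑' m : ℕ, (t (n + 1 + m) ^ 2)⁻¹) ^ 2)) :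
    ∃ u : ℤ → ℝ, IsSolution (pcoefD p β) lam u ∧ Summable (fun n : ℕ => u n ^ 2) := by
  have hl : |lam| < 2 := by
    have hc : |Real.cos φ| < 1 := by
      rw [← sq_lt_one_iff_abs_lt_one]
      nlinarith [Real.sin_sq_add_cos_sq φ, Real.sin_pos_of_mem_Ioo hφ]
    rw [hlam, abs_mul, abs_two]
    linarith
  have hd : 0 < 1 - |lam| / 2 := by linarith
  set A : ℕ → Matrix (Fin 2) (Fin 2) ℝ := fun n => TmatD p β lam (aseq β (n + 1) + 1) with hAdef
  have ht : ∀ n, t (n + 1) = ‖act (A n)‖ := fun n => htdef (n + 1)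
  have hdet : ∀ n, (A n).det = 1 := by
    intro n
    have h4 := four_le_pow hβ (n := n + 1) (by omega)
    have ha := aseq_succ β (n + 1) (by omega)
    rw [hAdef, det_Tmat hp, pcoef_eq_one (n := n + 1) (by omega) (by omega) (by omega), div_one]
  set M : ℝ := 2 / (1 - |lam| / 2) * (10 / p ^ 2) ^ 2 with hM
  have hM0 : 0 ≤ M := by positivity
  have hgrow : ∀ n x, ‖act (A n) x‖ ≤ √M * ‖act (A (n + 1)) x‖ := by
    intro n x
    refine (abs_le_of_sq_le_sq' ?_ (by positivity)).2
    rw [mul_pow, Real.sq_sqrt hM0]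
    exact normSq_block hp hβ hl x (n := n + 1) (by omega)
  have hβ1 : (1 : ℝ) ≤ β := by exact_mod_cast (by omega : 1 ≤ β)
  have hs : Summable fun n => (‖act (A n)‖ ^ 2)⁻¹ := by
    refine h1.of_nonneg_of_le (fun n => by positivity) fun n => ?_
    rw [ht]
    exact le_mul_of_one_le_left (by positivity) (one_le_pow₀ hβ1)
  obtain ⟨x, hx, hxA⟩ := exists_subordinate A hdet (√M) (Real.sqrt_nonneg _) hgrow hs
  rw [Real.sq_sqrt hM0] at hxA
  refine ⟨sol p β lam x, isSolution_sol hp β lam hx, ?_⟩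
  refine summable_of_blocks hβ _ (fun n => 2 / (1 - |lam| / 2) * ‖act (A n) x‖ ^ 2)
    (fun _ => sq_nonneg _) (fun _ => by positivity)
    (fun n i hi => sq_block hp hβ hl x (n := n + 1) (by omega) i hi) ?_
  refine ((h1.mul_left (β * (2 / (1 - |lam| / 2)) * 8)).add
    (h2.mul_left (β * (2 / (1 - |lam| / 2)) * (2 * (4 * M) ^ 2)))).of_nonneg_of_le
    (fun n => by positivity) fun n => ?_
  have hsum : ∑' m, (t (n + 1 + m) ^ 2)⁻¹ = ∑' m, (‖act (A (n + m))‖ ^ 2)⁻¹ :=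
    tsum_congr fun m => by rw [← ht, add_right_comm]
  rw [hsum, ht]
  set S := ∑' m, (‖act (A (n + m))‖ ^ 2)⁻¹
  have hS : 0 ≤ S := tsum_nonneg fun m => by positivity
  have hsq : ‖act (A n) x‖ ^ 2 ≤
      8 * (‖act (A n)‖ ^ 2)⁻¹ + 2 * (4 * M) ^ 2 * (‖act (A n)‖ ^ 2 * S ^ 2) := by
    calc _ ≤ (2 / ‖act (A n)‖ + 4 * M * ‖act (A n)‖ * S) ^ 2 := by
          gcongr
          exact hxA n
      _ ≤ 2 * (2 / ‖act (A n)‖) ^ 2 + 2 * (4 * M * ‖act (A n)‖ * S) ^ 2 := by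
          nlinarith [sq_nonneg (2 / ‖act (A n)‖ - 4 * M * ‖act (A n)‖ * S)]
      _ = _ := by
          rw [div_pow, div_eq_mul_inv]
          ring
  calc _ ≤ (β : ℝ) ^ (n + 2) * (2 / (1 - |lam| / 2) * (8 * (‖act (A n)‖ ^ 2)⁻¹ +
        2 * (4 * M) ^ 2 * (‖act (A n)‖ ^ 2 * S ^ 2))) := by
        gcongr
    _ = _ := by ring
end

section
/- In the super-exponentially sparse model with decaying couplings described below, for every φ ∈ (0, π), λ = 2 cos φ, and every ω ∈ Λ: Σ_{n=0}^{∞} ‖T(n; λ)‖^{−2} = ∞, and consequently the eigenvalue equation at λ has no ℓ² solution. -/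
/-!
Along a stretch of sites with `p = 1` the quadratic form `Q(x, y) = x² - λ x y + y²` is conserved
by the transfer matrices, and for `λ = 2 cos φ` with `0 < φ < π` it is comparable to `x² + y²`.
Consecutive perturbed sites are at distance at least two, and crossing the `k`-th one (two steps)
multiplies `Q` by at most `K² q_k⁻²`, with `K` depending only on `φ`. Hence
`‖T(n)‖² ≤ C K^{2k} ∏_{j ≤ k} q_j⁻² ≤ C K^{2k} exp (c k^γ - c₂ k^δ)` for all `n` in the block between
the `k`-th and the `(k+1)`-st site (`energy_bound`). This block has at least
`exp (c k^γ) / (4 k + 6)` elements, so it contributes at least a constant times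
`exp (c₂ k^δ) / ((4 k + 6) K^{2k})` to the series. As `δ > 1`, this is unbounded in `k`
(`growth`), and the series diverges.

For the second claim, `det T(n) = 1 / p_n ≥ 1`, and `(det M)² |v|² ≤ |M v|² ‖M‖²` for every
2×2 matrix `M` (`det_sq_mul_le`). So a solution satisfies
`u_{n+1}² + u_n² ≥ (u_0² + u_{-1}²) ‖T(n)‖⁻²`, and the left side cannot be summable.
-/

open MeasureTheory Real

/-- The super-exponentially sparse positions: `a₀ = 0`, `a_n = a_{n-1} + ⌊e^{c n^γ}⌋`. -/
noncomputable def aseqG (c γ : ℝ) : ℕ → ℕ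
  | 0 => 0
  | (n + 1) => aseqG c γ n + ⌊Real.exp (c * ((n + 1 : ℕ) : ℝ) ^ γ)⌋₊

-- The coupling `p_n`: `p_n = q_k` if `n = a_k + ω_k` for some `k ≥ 1`, else `1`.
open Classical in
noncomputable def pcoefQ (q : ℕ → ℝ) (c γ : ℝ) (ω : ℕ → ℤ) (n : ℤ) : ℝ :=
  if h : ∃ j : ℕ, 1 ≤ j ∧ n = (aseqG c γ j : ℤ) + ω j then q h.choose else 1

/-- The one-step transfer matrix `T(n, n-1; λ) = [[λ/p_n, -p_{n-1}/p_n], [1, 0]]`. -/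
noncomputable def TstepQ (q : ℕ → ℝ) (c γ : ℝ) (ω : ℕ → ℤ) (lam : ℝ) (n : ℕ) :
    Matrix (Fin 2) (Fin 2) ℝ :=
  !![lam / pcoefQ q c γ ω n, -pcoefQ q c γ ω ((n : ℤ) - 1) / pcoefQ q c γ ω n; 1, 0]

/-- The product `T(n; λ) = T(n, n-1; λ) ⋯ T(0, -1; λ)`. -/
noncomputable def TmatQ (q : ℕ → ℝ) (c γ : ℝ) (ω : ℕ → ℤ) (lam : ℝ) :
    ℕ → Matrix (Fin 2) (Fin 2) ℝ
  | 0 => TstepQ q c γ ω lam 0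
  | (n + 1) => TstepQ q c γ ω lam (n + 1) * TmatQ q c γ ω lam n

/-! ### The operator norm of a 2×2 matrix -/

lemma sq_le_opNorm (M : Matrix (Fin 2) (Fin 2) ℝ) (v : Fin 2 → ℝ) :
    (M.mulVec v) 0 ^ 2 + (M.mulVec v) 1 ^ 2 ≤ opNorm M ^ 2 * (v 0 ^ 2 + v 1 ^ 2) := by
  have h := (Matrix.toEuclideanCLM (𝕜 := ℝ) (n := Fin 2) M).le_opNorm (WithLp.toLp 2 v)
  have h2 := pow_le_pow_left₀ (norm_nonneg _) h 2
  rw [mul_pow, EuclideanSpace.norm_sq_eq, EuclideanSpace.norm_sq_eq] at h2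
  simpa [opNorm, Fin.sum_univ_two] using h2

lemma opNorm_sq_le (M : Matrix (Fin 2) (Fin 2) ℝ) (C : ℝ) (hC : 0 ≤ C)
    (h : ∀ v : Fin 2 → ℝ, (M.mulVec v) 0 ^ 2 + (M.mulVec v) 1 ^ 2 ≤ C * (v 0 ^ 2 + v 1 ^ 2)) :
    opNorm M ^ 2 ≤ C := by
  have hb : opNorm M ≤ √C := by
    refine ContinuousLinearMap.opNorm_le_bound _ (Real.sqrt_nonneg _) fun x => ?_
    refine le_of_sq_le_sq ?_ (by positivity)
    rw [mul_pow, Real.sq_sqrt hC, EuclideanSpace.norm_sq_eq, EuclideanSpace.norm_sq_eq]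
    simpa [Fin.sum_univ_two] using h x.ofLp
  calc opNorm M ^ 2 ≤ √C ^ 2 := pow_le_pow_left₀ (norm_nonneg _) hb 2
    _ = C := Real.sq_sqrt hC

/-- Equivalently `‖M⁻¹‖ = ‖M‖ / |det M|` for invertible `M`: the area spanned by `M v` and `M v'`,
with `v'` the rotation of `v` by a right angle, is `|det M| |v|²` and at most `|M v| ‖M‖ |v|`. -/
lemma det_sq_mul_le (M : Matrix (Fin 2) (Fin 2) ℝ) (v : Fin 2 → ℝ) :
    M.det ^ 2 * (v 0 ^ 2 + v 1 ^ 2) ≤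
      ((M.mulVec v) 0 ^ 2 + (M.mulVec v) 1 ^ 2) * opNorm M ^ 2 := by
  have h := sq_le_opNorm M ![-v 1, v 0]
  simp only [Matrix.mulVec, dotProduct, Fin.sum_univ_two, Matrix.cons_val_zero,
    Matrix.cons_val_one, Matrix.det_fin_two] at h ⊢
  rcases eq_or_lt_of_le (by positivity : 0 ≤ v 0 ^ 2 + v 1 ^ 2) with h0 | h0
  · rw [← h0, mul_zero]; positivity
  · refine le_of_mul_le_mul_right ?_ h0
    set A := M 0 0 * v 0 + M 0 1 * v 1
    set B := M 1 0 * v 0 + M 1 1 * v 1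
    set A' := M 0 0 * -v 1 + M 0 1 * v 0
    set B' := M 1 0 * -v 1 + M 1 1 * v 0
    have e : (M 0 0 * M 1 1 - M 0 1 * M 1 0) * (v 0 ^ 2 + v 1 ^ 2) = A * B' - B * A' := by
      simp only [A, B, A', B']; ring
    calc (M 0 0 * M 1 1 - M 0 1 * M 1 0) ^ 2 * (v 0 ^ 2 + v 1 ^ 2) * (v 0 ^ 2 + v 1 ^ 2)
        = (A * B' - B * A') ^ 2 := by rw [← e]; ring
      _ ≤ (A ^ 2 + B ^ 2) * (A' ^ 2 + B' ^ 2) := by nlinarith [sq_nonneg (A * A' + B * B')]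
      _ ≤ (A ^ 2 + B ^ 2) * (opNorm M ^ 2 * ((-v 1) ^ 2 + v 0 ^ 2)) := by gcongr
      _ = _ := by ring

/-! ### The conserved quadratic form -/

/-- The quadratic form `x² - λ x y + y²`, invariant under the free transfer matrix
`[[λ, -1], [1, 0]]`. -/
def energy (lam : ℝ) (v : Fin 2 → ℝ) : ℝ := v 0 ^ 2 - lam * v 0 * v 1 + v 1 ^ 2

lemma energy_le (lam : ℝ) (hl : |lam| ≤ 2) (v : Fin 2 → ℝ) :
    energy lam v ≤ 2 * (v 0 ^ 2 + v 1 ^ 2) := by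
  unfold energy
  obtain ⟨h1, h2⟩ := abs_le.mp hl
  nlinarith [mul_nonneg (by linarith : 0 ≤ 2 + lam) (sq_nonneg (v 0 - v 1)),
    mul_nonneg (by linarith : 0 ≤ 2 - lam) (sq_nonneg (v 0 + v 1)), sq_nonneg (v 0 - v 1),
    sq_nonneg (v 0 + v 1)]

lemma le_energy (lam : ℝ) (v : Fin 2 → ℝ) :
    (1 - |lam| / 2) * (v 0 ^ 2 + v 1 ^ 2) ≤ energy lam v := by
  unfold energy
  rcases abs_cases lam with ⟨h, h'⟩ | ⟨h, h'⟩ <;> rw [h]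
  · nlinarith [mul_nonneg h' (sq_nonneg (v 0 - v 1))]
  · nlinarith [mul_nonneg (by linarith : 0 ≤ -lam) (sq_nonneg (v 0 + v 1))]

/-- One transfer step with couplings `p = p_{n-1}` and `p' = p_n`. -/
noncomputable def tstep (lam p p' : ℝ) (v : Fin 2 → ℝ) : Fin 2 → ℝ :=
  ![(lam * v 0 - p * v 1) / p', v 0]

lemma energy_tstep_free (lam : ℝ) (v : Fin 2 → ℝ) :
    energy lam (tstep lam 1 1 v) = energy lam v := by
  simp [energy, tstep]; ring

/-- Energy growth in an arbitrary step with couplings in `(0, 1]`. The constant is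
`18 = 2 (8 + 1)`, from `(λ x - p y)² ≤ 8 (x² + y²)` and `Q ≤ 2 (x² + y²)`. -/
lemma energy_tstep_le (lam p p' : ℝ) (hl : |lam| < 2) (hp : 0 < p) (hp1 : p ≤ 1)
    (hp' : 0 < p') (hp1' : p' ≤ 1) (v : Fin 2 → ℝ) :
    energy lam (tstep lam p p' v) ≤ 18 / (1 - |lam| / 2) * (p'⁻¹ ^ 2 * energy lam v) := by
  have hs : 0 < 1 - |lam| / 2 := by linarith
  have h1 := energy_le lam hl.le (tstep lam p p' v)
  have h2 := le_energy lam v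
  have hinv : 1 ≤ p'⁻¹ ^ 2 := one_le_pow₀ ((one_le_inv₀ hp').2 hp1')
  have hlam : lam ^ 2 ≤ 4 := by
    rw [← sq_abs]; nlinarith [abs_nonneg lam]
  have h3 : (lam * v 0 - p * v 1) ^ 2 ≤ 8 * (v 0 ^ 2 + v 1 ^ 2) := by
    have hpp : p ^ 2 ≤ 1 := by nlinarith
    nlinarith [sq_nonneg (lam * v 0 + p * v 1), mul_le_mul_of_nonneg_right hlam (sq_nonneg (v 0)),
      mul_le_mul_of_nonneg_right hpp (sq_nonneg (v 1)), sq_nonneg (v 1)]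
  calc energy lam (tstep lam p p' v)
      ≤ 2 * (p'⁻¹ ^ 2 * (lam * v 0 - p * v 1) ^ 2 + 1 * v 0 ^ 2) := by
        refine h1.trans (le_of_eq ?_)
        simp [tstep]; ring
    _ ≤ 2 * (p'⁻¹ ^ 2 * (8 * (v 0 ^ 2 + v 1 ^ 2)) + p'⁻¹ ^ 2 * (v 0 ^ 2 + v 1 ^ 2)) := by
        gcongr; nlinarith [sq_nonneg (v 1)]
    _ = 18 / (1 - |lam| / 2) * (p'⁻¹ ^ 2 * ((1 - |lam| / 2) * (v 0 ^ 2 + v 1 ^ 2))) := by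
        have e : 18 / (1 - |lam| / 2) * (1 - |lam| / 2) = 18 := div_mul_cancel₀ _ hs.ne'
        linear_combination -(p'⁻¹ ^ 2 * (v 0 ^ 2 + v 1 ^ 2)) * e
    _ ≤ _ := by
        have : 0 ≤ 18 / (1 - |lam| / 2) := by positivity
        gcongr

/-- The first orbit index in the block after the `k`-th perturbed site, where `s j` is the position
of the `j`-th perturbed site, `j ≥ 1`. The step `Z n ↦ Z (n + 1)` involves `p_{n-1}` and `p_n`, so
the site `s j` affects the steps `s j` and `s j + 1`, and the free steps resume at `s j + 2`. -/
def blockStart (s : ℕ → ℕ) : ℕ → ℕ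
  | 0 => 0
  | k + 1 => s (k + 1) + 2

/-- Energy of an orbit of the transfer matrices inside the block between the `k`-th and the
`(k+1)`-st perturbed site. -/
lemma energy_bound (lam : ℝ) (hl : |lam| < 2) (p : ℤ → ℝ) (hp : ∀ n, 0 < p n)
    (hp1 : ∀ n, p n ≤ 1) (q : ℕ → ℝ) (s : ℕ → ℕ)
    (hb : ∀ k, blockStart s k ≤ s (k + 1)) (hsite : ∀ k, p (s (k + 1)) = q (k + 1))
    (hfree : ∀ k, ∀ m : ℤ, (blockStart s k : ℤ) - 1 ≤ m → m < s (k + 1) → p m = 1)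
    (Z : ℕ → Fin 2 → ℝ) (hZ : ∀ n : ℕ, Z (n + 1) = tstep lam (p (n - 1)) (p n) (Z n)) (k : ℕ) :
    ∀ n, blockStart s k ≤ n → n ≤ s (k + 1) → energy lam (Z n) ≤
      (18 / (1 - |lam| / 2)) ^ (2 * k) * (∏ j ∈ Finset.Icc 1 k, ((q j)⁻¹) ^ 2) *
        energy lam (Z 0) := by
  have hs : 0 < 1 - |lam| / 2 := by linarith
  have hconst : ∀ k, ∀ n, blockStart s k ≤ n → n ≤ s (k + 1) →
      energy lam (Z n) = energy lam (Z (blockStart s k)) := by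
    intro k n hn
    induction n, hn using Nat.le_induction with
    | base => intro _; rfl
    | succ n hn ih =>
      intro hn'
      rw [hZ, hfree k n (by omega) (by omega), hfree k (n - 1) (by omega) (by omega),
        energy_tstep_free, ih (by omega)]
  suffices H : energy lam (Z (blockStart s k)) ≤
      (18 / (1 - |lam| / 2)) ^ (2 * k) * (∏ j ∈ Finset.Icc 1 k, ((q j)⁻¹) ^ 2) *
        energy lam (Z 0) by
    intro n hn hn'
    rw [hconst k n hn hn']; exact H
  induction k with
  | zero => simp [blockStart]
  | succ k ih =>
    have e1 := energy_tstep_le lam (p ((s (k + 1) : ℕ) - 1)) (p (s (k + 1))) hl (hp _) (hp1 _)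
      (hp _) (hp1 _) (Z (s (k + 1)))
    rw [← hZ, hsite, hconst k _ (hb k) le_rfl] at e1
    have e2 := energy_tstep_le lam (p ((s (k + 1) + 1 : ℕ) - 1)) (p (s (k + 1) + 1 : ℕ)) hl
      (hp _) (hp1 _) (hp _) (hp1 _) (Z (s (k + 1) + 1))
    have hb' := hb (k + 1)
    rw [← hZ, hfree (k + 1) (s (k + 1) + 1 : ℕ) (by simp only [blockStart]; omega)
      (by simp only [blockStart] at hb'; omega)] at e2
    rw [inv_one, one_pow, one_mul] at e2
    have hK : 0 ≤ 18 / (1 - |lam| / 2) := by positivity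
    set K := 18 / (1 - |lam| / 2)
    calc energy lam (Z (blockStart s (k + 1))) ≤ K * energy lam (Z (s (k + 1) + 1)) := e2
      _ ≤ K * (K * ((q (k + 1))⁻¹ ^ 2 * energy lam (Z (blockStart s k)))) := by gcongr
      _ ≤ K * (K * ((q (k + 1))⁻¹ ^ 2 *
          (K ^ (2 * k) * (∏ j ∈ Finset.Icc 1 k, ((q j)⁻¹) ^ 2) * energy lam (Z 0)))) := by gcongr
      _ = _ := by rw [Finset.prod_Icc_succ_top (by omega)]; ring

/-! ### Positions of the perturbed sites -/

/-- The position `a_j + ω_j` of the `j`-th perturbed site. -/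
noncomputable def site (c γ : ℝ) (ω : ℕ → ℤ) (j : ℕ) : ℤ := (aseqG c γ j : ℤ) + ω j

lemma site_gap (c γ : ℝ) (ω : ℕ → ℤ)
    (hω : ∀ j : ℕ, 1 ≤ j → ω j ∈ Finset.Icc (-(j : ℤ)) (j : ℤ)) (k : ℕ) (hk : 1 ≤ k) :
    (⌊Real.exp (c * ((k + 1 : ℕ) : ℝ) ^ γ)⌋₊ : ℤ) - 2 * k - 1 ≤
      site c γ ω (k + 1) - site c γ ω k := by
  have h1 := Finset.mem_Icc.mp (hω k hk)
  have h2 := Finset.mem_Icc.mp (hω (k + 1) (by omega))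
  simp only [site, aseqG]
  push_cast at h2 ⊢
  omega

lemma two_le_site_one (c γ : ℝ) (ω : ℕ → ℤ)
    (hfloor : ∀ n : ℕ, 1 ≤ n → 2 * n + 1 ≤ ⌊Real.exp (c * (n : ℝ) ^ γ)⌋₊)
    (hω : ∀ j : ℕ, 1 ≤ j → ω j ∈ Finset.Icc (-(j : ℤ)) (j : ℤ)) : 2 ≤ site c γ ω 1 := by
  have h1 := Finset.mem_Icc.mp (hω 1 le_rfl)
  have h2 := hfloor 1 le_rfl
  simp only [site, aseqG]
  push_cast at h1 h2 ⊢
  omega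

lemma site_add_two_le (c γ : ℝ) (ω : ℕ → ℤ)
    (hfloor : ∀ n : ℕ, 1 ≤ n → 2 * n + 1 ≤ ⌊Real.exp (c * (n : ℝ) ^ γ)⌋₊)
    (hω : ∀ j : ℕ, 1 ≤ j → ω j ∈ Finset.Icc (-(j : ℤ)) (j : ℤ)) (k : ℕ) (hk : 1 ≤ k) :
    site c γ ω k + 2 ≤ site c γ ω (k + 1) := by
  have h1 := site_gap c γ ω hω k hk
  have h2 := hfloor (k + 1) (by omega)
  omega

lemma strictMono_site (c γ : ℝ) (ω : ℕ → ℤ)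
    (hfloor : ∀ n : ℕ, 1 ≤ n → 2 * n + 1 ≤ ⌊Real.exp (c * (n : ℝ) ^ γ)⌋₊)
    (hω : ∀ j : ℕ, 1 ≤ j → ω j ∈ Finset.Icc (-(j : ℤ)) (j : ℤ)) :
    StrictMono fun k => site c γ ω (k + 1) :=
  strictMono_nat_of_lt_succ fun k => by
    have := site_add_two_le c γ ω hfloor hω (k + 1) (by omega)
    omega

lemma pcoefQ_site (c γ : ℝ) (q : ℕ → ℝ) (ω : ℕ → ℤ)
    (hfloor : ∀ n : ℕ, 1 ≤ n → 2 * n + 1 ≤ ⌊Real.exp (c * (n : ℝ) ^ γ)⌋₊)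
    (hω : ∀ j : ℕ, 1 ≤ j → ω j ∈ Finset.Icc (-(j : ℤ)) (j : ℤ)) (k : ℕ) :
    pcoefQ q c γ ω (site c γ ω (k + 1)) = q (k + 1) := by
  have hex : ∃ j : ℕ, 1 ≤ j ∧ site c γ ω (k + 1) = (aseqG c γ j : ℤ) + ω j :=
    ⟨k + 1, by omega, rfl⟩
  have hch := hex.choose_spec
  unfold pcoefQ
  rw [dif_pos hex]
  obtain ⟨m, hm⟩ : ∃ m, hex.choose = m + 1 := ⟨hex.choose - 1, by omega⟩
  have h2 : site c γ ω (k + 1) = site c γ ω (m + 1) := by rw [← hm]; exact hch.2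
  rw [hm, (strictMono_site c γ ω hfloor hω).injective h2]

lemma pcoefQ_free (c γ : ℝ) (q : ℕ → ℝ) (ω : ℕ → ℤ) (n : ℤ)
    (hn : ∀ k, n ≠ site c γ ω (k + 1)) : pcoefQ q c γ ω n = 1 := by
  unfold pcoefQ
  rw [dif_neg]
  rintro ⟨j, hj, h⟩
  obtain ⟨m, rfl⟩ : ∃ m, j = m + 1 := ⟨j - 1, by omega⟩
  exact hn m h

lemma pcoefQ_mem (c γ : ℝ) (q : ℕ → ℝ) (ω : ℕ → ℤ)
    (hq01 : ∀ k : ℕ, 1 ≤ k → q k ∈ Set.Ioo (0 : ℝ) 1) (n : ℤ) :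
    0 < pcoefQ q c γ ω n ∧ pcoefQ q c γ ω n ≤ 1 := by
  unfold pcoefQ
  split_ifs with h
  · exact ⟨(hq01 _ h.choose_spec.1).1, (hq01 _ h.choose_spec.1).2.le⟩
  · norm_num

/-! ### Transfer matrices and solutions -/

lemma TstepQ_mulVec (q : ℕ → ℝ) (c γ : ℝ) (ω : ℕ → ℤ) (lam : ℝ) (n : ℕ) (v : Fin 2 → ℝ) :
    (TstepQ q c γ ω lam n).mulVec v =
      tstep lam (pcoefQ q c γ ω (n - 1)) (pcoefQ q c γ ω n) v := by
  ext i
  fin_cases i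
  · simp [TstepQ, tstep, Matrix.mulVec, dotProduct, Fin.sum_univ_two]; ring
  · simp [TstepQ, tstep, Matrix.mulVec, dotProduct, Fin.sum_univ_two]

/-- The orbit of `v` under the transfer matrices, shifted so that it starts with `v` itself. -/
noncomputable def orbit (q : ℕ → ℝ) (c γ : ℝ) (ω : ℕ → ℤ) (lam : ℝ) (v : Fin 2 → ℝ) :
    ℕ → Fin 2 → ℝ
  | 0 => v
  | n + 1 => (TmatQ q c γ ω lam n).mulVec v

lemma orbit_succ (q : ℕ → ℝ) (c γ : ℝ) (ω : ℕ → ℤ) (lam : ℝ) (v : Fin 2 → ℝ) (n : ℕ) :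
    orbit q c γ ω lam v (n + 1) =
      tstep lam (pcoefQ q c γ ω (n - 1)) (pcoefQ q c γ ω n) (orbit q c γ ω lam v n) := by
  rw [← TstepQ_mulVec]
  cases n with
  | zero => rfl
  | succ n => simp only [orbit, TmatQ, Matrix.mulVec_mulVec]

lemma det_TmatQ (q : ℕ → ℝ) (c γ : ℝ) (ω : ℕ → ℤ) (lam : ℝ)
    (hp : ∀ n, 0 < pcoefQ q c γ ω n) (hp0 : pcoefQ q c γ ω (-1) = 1) (n : ℕ) :
    (TmatQ q c γ ω lam n).det = (pcoefQ q c γ ω n)⁻¹ := by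
  induction n with
  | zero =>
    simp [TmatQ, TstepQ, Matrix.det_fin_two, hp0, neg_div]
  | succ n ih =>
    rw [TmatQ, Matrix.det_mul, ih]
    have h1 := (hp n).ne'
    have h2 := (hp (n + 1 : ℕ)).ne'
    push_cast at h2
    simp [TstepQ, Matrix.det_fin_two, neg_div]
    field_simp

lemma solution_eq_orbit (q : ℕ → ℝ) (c γ : ℝ) (ω : ℕ → ℤ) (lam : ℝ)
    (hp : ∀ n, 0 < pcoefQ q c γ ω n) (u : ℤ → ℝ) (hu : IsSolution (pcoefQ q c γ ω) lam u)
    (n : ℕ) : orbit q c γ ω lam ![u 0, u (-1)] n = ![u n, u (n - 1)] := by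
  induction n with
  | zero => simp [orbit]
  | succ n ih =>
    rw [orbit_succ, ih]
    have h := hu.2 n (by positivity)
    have h1 := (hp n).ne'
    have e : (lam * u n - pcoefQ q c γ ω (n - 1) * u (n - 1)) / pcoefQ q c γ ω n = u (n + 1) := by
      field_simp; linarith
    simp [tstep, e]

lemma solution_init_pos (q : ℕ → ℝ) (c γ : ℝ) (ω : ℕ → ℤ) (lam : ℝ)
    (hp : ∀ n, 0 < pcoefQ q c γ ω n) (u : ℤ → ℝ) (hu : IsSolution (pcoefQ q c γ ω) lam u) :
    0 < u 0 ^ 2 + u (-1) ^ 2 := by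
  by_contra hcon
  have h0 : u 0 = 0 := by nlinarith [sq_nonneg (u 0), sq_nonneg (u (-1))]
  have h1 : u (-1) = 0 := by nlinarith [sq_nonneg (u 0), sq_nonneg (u (-1))]
  obtain ⟨k, hk, hne⟩ := hu.1
  have h := solution_eq_orbit q c γ ω lam hp u hu (k + 1).toNat
  have hz : orbit q c γ ω lam ![u 0, u (-1)] (k + 1).toNat = 0 := by
    have hv : (![u 0, u (-1)] : Fin 2 → ℝ) = 0 := by
      ext i; fin_cases i <;> simp [h0, h1]
    rw [hv]
    cases (k + 1).toNat <;> simp [orbit]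
  have h2 := congrFun (hz.symm.trans h) 1
  rw [Int.toNat_of_nonneg (by omega)] at h2
  simp at h2
  exact hne h2.symm

/-! ### Divergence -/

lemma growth (K c₂ δ : ℝ) (hK : 0 < K) (hc2 : 0 < c₂) (hδ : 1 < δ) (M : ℝ) :
    ∃ k : ℕ, 1 ≤ k ∧ M < Real.exp (c₂ * (k : ℝ) ^ δ) / ((4 * k + 6) * K ^ (2 * k)) := by
  have ht : Filter.Tendsto (fun k : ℕ => c₂ * (k : ℝ) ^ (δ - 1)) Filter.atTop Filter.atTop :=
    ((tendsto_rpow_atTop (by linarith)).comp tendsto_natCast_atTop_atTop).const_mul_atTop hc2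
  obtain ⟨k, h1, h2, h3⟩ := ((ht.eventually_ge_atTop (2 + 2 * Real.log K)).and
    ((Filter.eventually_ge_atTop 1).and
      (tendsto_natCast_atTop_atTop.eventually_gt_atTop (10 * M)))).exists
  refine ⟨k, h2, ?_⟩
  have hk : (1 : ℝ) ≤ k := by exact_mod_cast h2
  have hpow : (k : ℝ) ^ δ = k ^ (δ - 1) * k := by
    rw [← Real.rpow_add_one (by positivity)]; congr 1; ring
  have hKe : K ^ (2 * k) = Real.exp (2 * k * Real.log K) := by
    rw [mul_comm _ (Real.log K), ← Real.rpow_def_of_pos hK, ← Real.rpow_natCast]; push_cast; rfl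
  have hek : (k : ℝ) ≤ Real.exp k := by linarith [Real.add_one_le_exp (k : ℝ)]
  rw [lt_div_iff₀ (by positivity), hKe]
  rcases le_or_gt M 0 with hM | hM
  · exact lt_of_le_of_lt (mul_nonpos_of_nonpos_of_nonneg hM (by positivity)) (Real.exp_pos _)
  calc M * ((4 * k + 6) * Real.exp (2 * k * Real.log K))
      < (k / 10) * ((4 * k + 6) * Real.exp (2 * k * Real.log K)) := by gcongr; linarith
    _ ≤ (Real.exp k / 10) * ((10 * Real.exp k) * Real.exp (2 * k * Real.log K)) := by
        gcongr; linarith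
    _ = Real.exp (k * (2 + 2 * Real.log K)) := by
        rw [show (k : ℝ) * (2 + 2 * Real.log K) = k + k + 2 * k * Real.log K by ring,
          Real.exp_add, Real.exp_add]; ring
    _ ≤ Real.exp (c₂ * (k : ℝ) ^ δ) := by
        rw [hpow, Real.exp_le_exp]
        linarith [mul_le_mul_of_nonneg_right h1 (by positivity : (0 : ℝ) ≤ k)]

/-- If `⌊x⌋ ≥ m := 2 k + 3`, then `⌊x⌋ - (m - 1) ≥ ⌊x⌋ / m ≥ x / (2 m)`, which bounds the length of
the `k`-th block from below. -/
lemma block_card_le (x : ℝ) (k : ℕ) (h : 2 * (k + 1) + 1 ≤ ⌊x⌋₊) :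
    x / (4 * k + 6) ≤ (⌊x⌋₊ : ℝ) - 2 * k - 2 := by
  have h1 : (2 * (k + 1) + 1 : ℝ) ≤ (⌊x⌋₊ : ℝ) := by exact_mod_cast h
  have h2 := Nat.lt_floor_add_one x
  have hk : (0 : ℝ) ≤ k := by positivity
  rw [div_le_iff₀ (by positivity)]
  nlinarith [mul_nonneg hk (sub_nonneg.2 h1)]


/-- Super-exponential sparseness with decaying couplings: for every `φ ∈ (0,π)`,
`λ = 2 cos φ` and every admissible `ω`, the series `∑_n ‖T(n;λ)‖⁻²` diverges and
consequently the eigenvalue equation at `λ` has no ℓ² solution. -/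
theorem statement16 (c γ δ c₁ c₂ φ : ℝ) (q : ℕ → ℝ)
    (hc : 0 < c) (hγδ : γ > δ) (hδ : δ > 1) (hδγ : δ > γ - 1)
    (hc12 : c₁ ≥ c₂) (hc2 : c₂ > 0)
    (hq01 : ∀ k : ℕ, 1 ≤ k → q k ∈ Set.Ioo (0 : ℝ) 1)
    (hqlow : ∀ n : ℕ, 1 ≤ n →
      Real.exp (c * (n : ℝ) ^ γ - c₁ * (n : ℝ) ^ δ) ≤ ∏ k ∈ Finset.Icc 1 n, ((q k)⁻¹) ^ 2)
    (hqhigh : ∀ n : ℕ, 1 ≤ n →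
      (∏ k ∈ Finset.Icc 1 n, ((q k)⁻¹) ^ 2) ≤ Real.exp (c * (n : ℝ) ^ γ - c₂ * (n : ℝ) ^ δ))
    (hfloor : ∀ n : ℕ, 1 ≤ n → 2 * n + 1 ≤ ⌊Real.exp (c * (n : ℝ) ^ γ)⌋₊)
    (hφ : φ ∈ Set.Ioo 0 π) (lam : ℝ) (hlam : lam = 2 * Real.cos φ)
    (ω : ℕ → ℤ) (hω : ∀ j : ℕ, 1 ≤ j → ω j ∈ Finset.Icc (-(j : ℤ)) (j : ℤ)) :
    (¬ Summable (fun n : ℕ => (opNorm (TmatQ q c γ ω lam n) ^ 2)⁻¹)) ∧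
    ∀ u : ℤ → ℝ, IsSolution (pcoefQ q c γ ω) lam u → ¬ Summable (fun n : ℕ => u n ^ 2) := by
  have hl : |lam| < 2 := by
    have h1 : Real.cos φ < 1 := by
      rw [← Real.cos_zero]
      exact Real.cos_lt_cos_of_nonneg_of_le_pi le_rfl hφ.2.le hφ.1
    have h2 : -1 < Real.cos φ := by
      rw [← Real.cos_pi]
      exact Real.cos_lt_cos_of_nonneg_of_le_pi hφ.1.le le_rfl hφ.2
    rw [hlam, abs_lt]; constructor <;> linarith
  have hσ : 0 < 1 - |lam| / 2 := by linarith
  have hp : ∀ n, 0 < pcoefQ q c γ ω n := fun n => (pcoefQ_mem c γ q ω hq01 n).1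
  have hp1 : ∀ n, pcoefQ q c γ ω n ≤ 1 := fun n => (pcoefQ_mem c γ q ω hq01 n).2
  have hmono := strictMono_site c γ ω hfloor hω
  have hone := two_le_site_one c γ ω hfloor hω
  have hge : ∀ k, 2 ≤ site c γ ω (k + 1) := fun k => hone.trans (hmono.monotone (Nat.zero_le k))
  set s : ℕ → ℕ := fun j => (site c γ ω j).toNat with hs
  have hscast : ∀ k, (s (k + 1) : ℤ) = site c γ ω (k + 1) := fun k =>
    Int.toNat_of_nonneg (by have := hge k; omega)
  have hstep : ∀ k, site c γ ω (k + 1) + 2 ≤ site c γ ω (k + 2) := fun k =>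
    site_add_two_le c γ ω hfloor hω (k + 1) (by omega)
  have hb : ∀ k, blockStart s k ≤ s (k + 1) := by
    rintro (_ | k)
    · exact Nat.zero_le _
    · have h1 := hstep k
      rw [← hscast, ← hscast] at h1
      simp only [blockStart]; omega
  have hfree : ∀ k, ∀ m : ℤ, (blockStart s k : ℤ) - 1 ≤ m → m < s (k + 1) →
      pcoefQ q c γ ω m = 1 := by
    intro k m hm1 hm2
    refine pcoefQ_free c γ q ω m fun j hj => ?_
    -- A perturbed site to the left of the `(k+1)`-st one lies at or before the `k`-th one.
    rw [hscast, hj] at hm2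
    have hjk : j < k := hmono.lt_iff_lt.1 hm2
    obtain ⟨i, rfl⟩ : ∃ i, k = i + 1 := ⟨k - 1, by omega⟩
    have h2 : site c γ ω (j + 1) ≤ site c γ ω (i + 1) := hmono.monotone (by omega)
    simp only [blockStart] at hm1
    push_cast at hm1
    rw [hscast, hj] at hm1
    omega
  have hpm1 : pcoefQ q c γ ω (-1) = 1 :=
    hfree 0 (-1) (by simp [blockStart]) (by have := hge 0; rw [hscast]; omega)
  have hdet : ∀ n, 1 ≤ (TmatQ q c γ ω lam n).det ^ 2 := fun n => by
    rw [det_TmatQ q c γ ω lam hp hpm1]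
    exact one_le_pow₀ ((one_le_inv₀ (hp _)).2 (hp1 _))
  have hTpos : ∀ n, 0 < opNorm (TmatQ q c γ ω lam n) ^ 2 := fun n => by
    have h1 := det_sq_mul_le (TmatQ q c γ ω lam n) ![1, 0]
    have h2 := hdet n
    rcases eq_or_lt_of_le (sq_nonneg (opNorm (TmatQ q c γ ω lam n))) with h | h
    · rw [← h, mul_zero] at h1
      norm_num at h1
      rw [h1] at h2
      norm_num at h2
    · exact h
  set K := 18 / (1 - |lam| / 2) with hK
  have hKpos : 0 < K := by positivity
  have hT : ∀ k n, blockStart s k ≤ n + 1 → n + 1 ≤ s (k + 1) →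
      opNorm (TmatQ q c γ ω lam n) ^ 2 ≤
        2 / (1 - |lam| / 2) * (K ^ (2 * k) * ∏ j ∈ Finset.Icc 1 k, ((q j)⁻¹) ^ 2) := by
    intro k n h1 h2
    have hP : 0 ≤ K ^ (2 * k) * ∏ j ∈ Finset.Icc 1 k, ((q j)⁻¹) ^ 2 := by positivity
    refine opNorm_sq_le _ _ (by positivity) fun v => ?_
    have hE := energy_bound lam hl (pcoefQ q c γ ω) hp hp1 q s hb
      (fun k => by rw [hscast]; exact pcoefQ_site c γ q ω hfloor hω k) hfree
      (orbit q c γ ω lam v) (orbit_succ q c γ ω lam v) k (n + 1) h1 h2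
    have hlow := le_energy lam (orbit q c γ ω lam v (n + 1))
    have hup := mul_le_mul_of_nonneg_left (energy_le lam hl.le v) hP
    simp only [orbit] at hE hlow
    rw [div_mul_eq_mul_div, div_mul_eq_mul_div, le_div_iff₀ hσ]
    linarith
  have hdiv : ¬ Summable (fun n : ℕ => (opNorm (TmatQ q c γ ω lam n) ^ 2)⁻¹) := by
    intro hsum
    obtain ⟨k, hk1, hk⟩ := growth K c₂ δ hKpos hc2 hδ
      (2 / (1 - |lam| / 2) * ∑' n : ℕ, (opNorm (TmatQ q c γ ω lam n) ^ 2)⁻¹)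
    obtain ⟨i, rfl⟩ : ∃ i, k = i + 1 := ⟨k - 1, by omega⟩
    -- Compare the full sum with the part over the `(i+1)`-st block.
    have hsle := hsum.sum_le_tsum (Finset.Ico (s (i + 1) + 1) (s (i + 1 + 1)))
      (fun n _ => by positivity)
    have hcard := Finset.card_nsmul_le_sum (Finset.Ico (s (i + 1) + 1) (s (i + 1 + 1)))
      (fun n : ℕ => (opNorm (TmatQ q c γ ω lam n) ^ 2)⁻¹)
      (2 / (1 - |lam| / 2) * (K ^ (2 * (i + 1)) *
        Real.exp (c * ((i + 1 : ℕ) : ℝ) ^ γ - c₂ * ((i + 1 : ℕ) : ℝ) ^ δ)))⁻¹ (by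
        intro n hn
        rw [Finset.mem_Ico] at hn
        refine inv_anti₀ (hTpos n) ((hT (i + 1) n (by simp only [blockStart]; omega)
          (by omega)).trans ?_)
        gcongr
        exact hqhigh (i + 1) hk1)
    have hcount : Real.exp (c * ((i + 1 : ℕ) : ℝ) ^ γ) / (4 * ((i + 1 : ℕ) : ℝ) + 6) ≤
        ((Finset.Ico (s (i + 1) + 1) (s (i + 1 + 1))).card : ℝ) := by
      have h1 := block_card_le _ (i + 1) (hfloor (i + 1 + 1) (by omega))
      have h2 := site_gap c γ ω hω (i + 1) hk1
      have h4 : ((⌊Real.exp (c * ((i + 1 + 1 : ℕ) : ℝ) ^ γ)⌋₊ : ℤ) : ℝ) - 2 * (i + 1 : ℕ) - 2 ≤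
          ((Finset.Ico (s (i + 1) + 1) (s (i + 1 + 1))).card : ℤ) := by
        have h5 : (⌊Real.exp (c * ((i + 1 + 1 : ℕ) : ℝ) ^ γ)⌋₊ : ℤ) - 2 * (i + 1 : ℕ) - 2 ≤
            ((Finset.Ico (s (i + 1) + 1) (s (i + 1 + 1))).card : ℤ) := by
          rw [Nat.card_Ico]
          have h6 := hscast i
          have h7 := hscast (i + 1)
          omega
        exact_mod_cast h5
      refine le_trans ?_ (h1.trans (by exact_mod_cast h4))
      have hγ : 0 ≤ γ := by linarith
      have hpow : ((i + 1 : ℕ) : ℝ) ^ γ ≤ ((i + 1 + 1 : ℕ) : ℝ) ^ γ :=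
        Real.rpow_le_rpow (by positivity) (by exact_mod_cast Nat.le_succ _) hγ
      gcongr
    rw [nsmul_eq_mul] at hcard
    have hchain := (mul_le_mul_of_nonneg_right hcount (by positivity)).trans (hcard.trans hsle)
    have hfin : 2 / (1 - |lam| / 2) *
        (Real.exp (c * ((i + 1 : ℕ) : ℝ) ^ γ) / (4 * ((i + 1 : ℕ) : ℝ) + 6) *
          (2 / (1 - |lam| / 2) * (K ^ (2 * (i + 1)) *
            Real.exp (c * ((i + 1 : ℕ) : ℝ) ^ γ - c₂ * ((i + 1 : ℕ) : ℝ) ^ δ)))⁻¹) =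
        Real.exp (c₂ * ((i + 1 : ℕ) : ℝ) ^ δ) /
          ((4 * ((i + 1 : ℕ) : ℝ) + 6) * K ^ (2 * (i + 1))) := by
      have hD : 2 / (1 - |lam| / 2) ≠ 0 := by positivity
      generalize 2 / (1 - |lam| / 2) = D at hD
      rw [Real.exp_sub]
      field_simp
    have hpos2 : 0 ≤ 2 / (1 - |lam| / 2) := by positivity
    have hlast := mul_le_mul_of_nonneg_left hchain hpos2
    rw [hfin] at hlast
    exact absurd hk (not_lt.2 hlast)
  refine ⟨hdiv, fun u hu hsum => hdiv ?_⟩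
  have hN := solution_init_pos q c γ ω lam hp u hu
  -- `‖T(n)‖⁻² ≤ (u_0² + u_{-1}²)⁻¹ (u_{n+1}² + u_n²)`
  have hsum1 : Summable fun n : ℕ => u ((n + 1 : ℕ) : ℤ) ^ 2 :=
    (summable_nat_add_iff (f := fun n : ℕ => u n ^ 2) 1).2 hsum
  refine Summable.of_nonneg_of_le (fun n => by positivity) (fun n => ?_)
    ((hsum1.add hsum).mul_left (u 0 ^ 2 + u (-1) ^ 2)⁻¹)
  have h1 := det_sq_mul_le (TmatQ q c γ ω lam n) ![u 0, u (-1)]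
  have h2 := solution_eq_orbit q c γ ω lam hp u hu (n + 1)
  rw [orbit] at h2
  rw [h2] at h1
  simp only [Matrix.cons_val_zero, Matrix.cons_val_one] at h1
  have h3 : ((n + 1 : ℕ) : ℤ) - 1 = n := by push_cast; ring
  rw [h3] at h1
  have h4 := le_mul_of_one_le_left hN.le (hdet n)
  rw [inv_mul_eq_div, inv_eq_one_div, div_le_div_iff₀ (hTpos n) hN]
  linarith
end
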